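/- Let α > 0 and n > α/π. With ρ_{α,n}, μ_{α,n}, ψ_{α,n} as in the context and b_{α,n}(x) = √((1+ρ_{α,n}x)/(1−ρ_{α,n}x)) on (−1,1), any bounded operator I + H(ψ_{α,n}) on ℓ²(ℕ) (with entries δ_{jk} + [ψ_{α,n}]_{j+k+1}) is invertible, and det H_n[b_{α,n}] = det[P_n (I + H(ψ_{α,n}))^{−1} P_n]. -/

import Mathlib

open Filter MeasureTheory
open scoped InnerProductSpace

noncomputable section

/-- ℓ²(ℕ) over ℂ. -/
abbrev l2 : Type := lp (fun _ : ℕ => ℂ) 2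

/-- The `k`-th Fourier coefficient of a function on the unit circle, given as a
`2π`-periodic function of the angle: `a_k = (1/(2π)) ∫_0^{2π} f(θ) e^{-ikθ} dθ`. -/
def fc (f : ℝ → ℂ) (k : ℤ) : ℂ :=
  ((1 / (2 * Real.pi) : ℝ) : ℂ) *
    ∫ θ in (0:ℝ)..(2 * Real.pi), f θ * Complex.exp (-(Complex.I * k * θ))

/-- The standard orthonormal basis vector `e_j` of ℓ²(ℕ). -/
def ee (j : ℕ) : l2 := lp.single 2 j 1

/-- Matrix entry `⟨e_j, A e_k⟩` of an operator on ℓ²(ℕ). -/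
def ent (A : l2 →L[ℂ] l2) (j k : ℕ) : ℂ := ⟪ee j, A (ee k)⟫_ℂ

/-- The function `χ` on the circle: `χ(e^{iθ}) = i` for `0 < θ < π` and
`χ(e^{iθ}) = −i` for `−π < θ < 0`. -/
def chi (θ : ℝ) : ℂ := if 0 < Real.sin θ then Complex.I else -Complex.I

/-- The real Hankel-matrix entry `(1/π) ∫_{-1}^1 b(x)(2x)^e dx`. -/
def bmomR (b : ℝ → ℝ) (e : ℕ) : ℝ :=
  (1 / Real.pi) * ∫ x in (-1:ℝ)..1, b x * (2 * x) ^ e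

/-!
Let `c(z) = c₊(z)` and `n(z) = c(z) √(1 - z²)`. On the upper half-circle the functions
`√(2/π) Re (z^j n/|n|)` have Gram matrix `I + H(ψ)`, while the functions `|n| (2 cos θ)^l / √(2π)`
have as Gram matrix the Hankel matrix of the moments of `b`, since `b(cos θ) = |c(e^{iθ})|²`. By the
mean value property for the disc the mixed Gram matrix of the two families is unitriangular, and
the first family is total. Hence the `N`-th section of `(I + H(ψ))⁻¹` is congruent to the Hankel
matrix through a unitriangular matrix, and the two determinants agree.

Invertibility holds because `H(ψ) ≥ 0`: on the upper half-circle `c(z)/c(z̄)` continues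
holomorphically to the upper half-plane with positive real part, so deforming the half-circle to
`[-1, 1]` shows that `H(ψ)` is a limit of Hankel matrices of moments of positive weights.
-/

open scoped ComplexConjugate ComplexOrder Real Topology

lemma inner_ee_left (j : ℕ) (x : l2) : ⟪ee j, x⟫_ℂ = x j := by
  simp [ee, lp.inner_single_left]

lemma inner_ee_ee (j k : ℕ) : ⟪ee j, ee k⟫_ℂ = if j = k then 1 else 0 := by
  rw [inner_ee_left]
  simp [ee, Pi.single_apply]

lemma ext_inner_ee {x y : l2} (h : ∀ j, ⟪ee j, x⟫_ℂ = ⟪ee j, y⟫_ℂ) : x = y := by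
  ext j
  simpa only [inner_ee_left] using h j

lemma hasSum_smul_ee (x : l2) : HasSum (fun j => x j • ee j) x := by
  simpa [ee, ← lp.single_smul] using lp.hasSum_single (p := 2) (by simp) x

lemma denseRange_linearCombination_ee : DenseRange (Finsupp.linearCombination ℂ ee) := by
  rintro x
  refine mem_closure_of_tendsto (hasSum_smul_ee x) (Eventually.of_forall fun s => ?_)
  rw [← LinearMap.coe_range, Finsupp.range_linearCombination]
  exact Submodule.sum_mem _ fun j _ => Submodule.smul_mem _ _ (Submodule.subset_span ⟨j, rfl⟩)

lemma inner_linearCombination_ee (T : l2 →L[ℂ] l2) (f g : ℕ →₀ ℂ) :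
    ⟪Finsupp.linearCombination ℂ ee f, T (Finsupp.linearCombination ℂ ee g)⟫_ℂ =
      f.sum fun j a => g.sum fun k b => conj a * ent T j k * b := by
  simp only [Finsupp.linearCombination_apply, Finsupp.sum, map_sum, map_smul, sum_inner, inner_sum,
    inner_smul_left, inner_smul_right, ent, Finset.mul_sum]
  rw [Finset.sum_comm]
  exact Finset.sum_congr rfl fun j _ => Finset.sum_congr rfl fun k _ => by ring

lemma isPositive_of_posSemidef_ent {T : l2 →L[ℂ] l2} (hT : (Matrix.of (ent T)).PosSemidef) :
    T.IsPositive := by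
  have hnonneg : ∀ x, 0 ≤ ⟪x, T x⟫_ℂ := fun x => by
    refine denseRange_linearCombination_ee.induction_on x
      (isClosed_le (by fun_prop) (by fun_prop)) fun f => ?_
    rw [inner_linearCombination_ee]
    exact hT.2 f
  refine T.isPositive_iff_complex.2 fun x => ?_
  have hle : 0 ≤ ⟪T x, x⟫_ℂ := by
    rw [← inner_conj_symm]
    exact star_nonneg_iff.2 (hnonneg x)
  exact ⟨(Complex.eq_re_of_ofReal_le hle).symm, (Complex.nonneg_iff.1 hle).1⟩

lemma isUnit_of_posSemidef_ent_sub_one {A : l2 →L[ℂ] l2}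
    (hA : (Matrix.of (ent (A - 1))).PosSemidef) : IsUnit A :=
  CStarAlgebra.isUnit_of_le 1
    ((ContinuousLinearMap.le_def _ _).2 (isPositive_of_posSemidef_ent hA))

section GramDeterminant

variable {K : Type*} [NormedAddCommGroup K] [InnerProductSpace ℂ K]

lemma inner_linearCombination_of_gram_eq {A : l2 →L[ℂ] l2} {r : ℕ → K}
    (hr : Matrix.gram ℂ r = Matrix.of (ent A)) (f g : ℕ →₀ ℂ) :
    ⟪Finsupp.linearCombination ℂ r f, Finsupp.linearCombination ℂ r g⟫_ℂ =
      ⟪Finsupp.linearCombination ℂ ee f, A (Finsupp.linearCombination ℂ ee g)⟫_ℂ := by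
  have hent : ∀ j k, ⟪r j, r k⟫_ℂ = ent A j k := fun j k => congr_fun₂ hr j k
  simp only [Finsupp.linearCombination_apply, Finsupp.sum, map_sum, map_smul, sum_inner, inner_sum,
    inner_smul_left, inner_smul_right, hent, ent]

lemma exists_map_ee_of_gram_eq [CompleteSpace K] {A : l2 →L[ℂ] l2} {r : ℕ → K}
    (hr : Matrix.gram ℂ r = Matrix.of (ent A)) : ∃ R : l2 →L[ℂ] K, ∀ j, R (ee j) = r j := by
  have hbound : ∀ f : ℕ →₀ ℂ, ‖Finsupp.linearCombination ℂ r f‖ ≤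
      √‖A‖ * ‖Finsupp.linearCombination ℂ ee f‖ := fun f => by
    refine le_of_sq_le_sq ?_ (by positivity)
    set x := Finsupp.linearCombination ℂ ee f
    calc ‖Finsupp.linearCombination ℂ r f‖ ^ 2
        = ‖⟪Finsupp.linearCombination ℂ r f, Finsupp.linearCombination ℂ r f⟫_ℂ‖ := by
          simp [inner_self_eq_norm_sq_to_K]
      _ = ‖⟪x, A x⟫_ℂ‖ := by rw [inner_linearCombination_of_gram_eq hr]
      _ ≤ ‖x‖ * (‖A‖ * ‖x‖) := (norm_inner_le_norm _ _).trans (by gcongr; exact A.le_opNorm x)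
      _ = (√‖A‖ * ‖x‖) ^ 2 := by rw [mul_pow, Real.sq_sqrt (norm_nonneg A)]; ring
  refine ⟨(Finsupp.linearCombination ℂ r).extendOfNorm (Finsupp.linearCombination ℂ ee),
    fun j => ?_⟩
  simpa using LinearMap.extendOfNorm_eq denseRange_linearCombination_ee ⟨_, hbound⟩
    (Finsupp.single j 1)

lemma comp_comp_adjoint_eq_one {E : Type*} [NormedAddCommGroup E] [InnerProductSpace ℂ E]
    [CompleteSpace E] [CompleteSpace K] {R : E →L[ℂ] K} {S : E →L[ℂ] E}
    (hS : S ∘L R.adjoint ∘L R = 1) (hR : DenseRange R) : R ∘L S ∘L R.adjoint = 1 := by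
  refine ContinuousLinearMap.ext fun y =>
    hR.induction_on y (isClosed_eq (by fun_prop) (by fun_prop)) fun x => ?_
  exact congr_arg R (DFunLike.congr_fun hS x)

lemma ent_adjoint_comp [CompleteSpace K] (R S : l2 →L[ℂ] K) (j k : ℕ) :
    ent (R.adjoint ∘L S) j k = ⟪R (ee j), S (ee k)⟫_ℂ :=
  ContinuousLinearMap.adjoint_inner_right R _ _

lemma ext_ent {S T : l2 →L[ℂ] l2} (h : ∀ j k, ent S j k = ent T j k) : S = T :=
  ContinuousLinearMap.ext fun x =>
    denseRange_linearCombination_ee.induction_on x (isClosed_eq (by fun_prop) (by fun_prop))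
      fun f => ext_inner_ee fun j => by
        simp only [Finsupp.linearCombination_apply, Finsupp.sum, map_sum, map_smul, inner_sum,
          inner_smul_right, ← ent.eq_1, h]

lemma denseRange_of_map_ee {R : l2 →L[ℂ] K} {r : ℕ → K} (hR : ∀ j, R (ee j) = r j)
    (hdense : Dense (Submodule.span ℂ (Set.range r) : Set K)) : DenseRange R := by
  suffices h : Submodule.span ℂ (Set.range r) ≤ R.toLinearMap.range from hdense.mono h
  rw [Submodule.span_le]
  rintro _ ⟨j, rfl⟩
  exact ⟨ee j, hR j⟩

lemma eq_sum_smul_ee {N : ℕ} {x : l2} (hx : ∀ j, N ≤ j → ⟪ee j, x⟫_ℂ = 0) :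
    x = ∑ j : Fin N, ⟪ee j, x⟫_ℂ • ee j := by
  rw [Fin.sum_univ_eq_sum_range (fun j => ⟪ee j, x⟫_ℂ • ee j) N]
  refine ext_inner_ee fun j => ?_
  simp only [inner_sum, inner_smul_right, inner_ee_ee, mul_ite, mul_one, mul_zero,
    Finset.sum_ite_eq, Finset.mem_range]
  split_ifs with hj
  · rfl
  · exact hx j (not_lt.1 hj)

lemma gram_eq_conjTranspose_mul_ent_mul [CompleteSpace K] {R : l2 →L[ℂ] K} {S : l2 →L[ℂ] l2}
    (hS : R ∘L S ∘L R.adjoint = 1) {N : ℕ} {p : Fin N → K}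
    (hp : ∀ l (j : ℕ), N ≤ j → ⟪R (ee j), p l⟫_ℂ = 0) {B : Matrix (Fin N) (Fin N) ℂ}
    (hB : ∀ j l, B j l = ⟪R (ee j), p l⟫_ℂ) :
    Matrix.gram ℂ p = B.conjTranspose * (Matrix.of fun j k : Fin N => ent S j k) * B := by
  have hcoord : ∀ l, R.adjoint (p l) = ∑ j : Fin N, B j l • ee j := fun l => by
    simp_rw [hB, ← ContinuousLinearMap.adjoint_inner_right]
    exact eq_sum_smul_ee fun j hj => by
      rw [ContinuousLinearMap.adjoint_inner_right, hp l j hj]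
  ext m l
  calc ⟪p m, p l⟫_ℂ = ⟪p m, R (S (R.adjoint (p l)))⟫_ℂ :=
        congr_arg _ (DFunLike.congr_fun hS (p l)).symm
    _ = ⟪∑ j : Fin N, B j m • ee j, S (∑ k : Fin N, B k l • ee k)⟫_ℂ := by
      rw [← ContinuousLinearMap.adjoint_inner_left, hcoord, hcoord]
    _ = (B.conjTranspose * (Matrix.of fun j k : Fin N => ent S j k) * B) m l := by
      simp only [map_sum, map_smul, sum_inner, inner_sum, inner_smul_left, inner_smul_right,
        Matrix.mul_apply, Matrix.conjTranspose_apply, Matrix.of_apply, Finset.sum_mul, ent,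
        RCLike.star_def]
      refine Finset.sum_congr rfl fun k _ => ?_
      rw [Finset.mul_sum]
      exact Finset.sum_congr rfl fun j _ => by ring

/-- If `R` maps the standard basis to `r`, then `A = R⋆R`, and `R A⁻¹ R⋆ = 1` because `r` is total;
the Gram matrix of `p` is therefore `B⋆ A⁻¹ B` for the unitriangular matrix `B = ⟪r, p⟫`. -/
theorem det_gram_eq_det_ent [CompleteSpace K] {A A' : l2 →L[ℂ] l2} (hA' : A' ∘L A = 1)
    {r p : ℕ → K}
    (hr : Matrix.gram ℂ r = Matrix.of (ent A))
    (hdense : Dense (Submodule.span ℂ (Set.range r) : Set K))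
    (hlt : ∀ j l, l < j → ⟪r j, p l⟫_ℂ = 0) (hdiag : ∀ j, ⟪r j, p j⟫_ℂ = 1) (N : ℕ) :
    (Matrix.gram ℂ fun j : Fin N => p j).det = (Matrix.of fun j k : Fin N => ent A' j k).det := by
  obtain ⟨R, hR⟩ := exists_map_ee_of_gram_eq hr
  have hRA : R.adjoint ∘L R = A := ext_ent fun j k => by
    rw [ent_adjoint_comp, hR, hR]
    exact congr_fun₂ hr j k
  have hone : R ∘L A' ∘L R.adjoint = 1 :=
    comp_comp_adjoint_eq_one (by rw [hRA, hA']) (denseRange_of_map_ee hR hdense)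
  set B : Matrix (Fin N) (Fin N) ℂ := Matrix.of fun j l => ⟪R (ee j), p l⟫_ℂ with hB
  have hdetB : B.det = 1 := by
    rw [Matrix.det_of_isUpperTriangular fun j l hlj => by simpa [hB, hR] using hlt j l hlj]
    simp [hB, hR, hdiag]
  have hgram := gram_eq_conjTranspose_mul_ent_mul (p := fun l : Fin N => p l) hone
    (fun l j hj => by rw [hR]; exact hlt j l (l.2.trans_le hj)) (B := B) fun _ _ => rfl
  rw [hgram, Matrix.det_mul, Matrix.det_mul, Matrix.det_conjTranspose, hdetB, star_one, one_mul,
    mul_one]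

end GramDeterminant

section Approximation

lemma exists_polynomial_near_of_differentiableOn_ball {f : ℂ → ℂ} {r R : ℝ} (hr : 0 ≤ r)
    (hrR : r < R) (hf : DifferentiableOn ℂ f (Metric.ball 0 R)) {ε : ℝ} (hε : 0 < ε) :
    ∃ P : Polynomial ℂ, ∀ z, ‖z‖ ≤ r → ‖f z - P.eval z‖ ≤ ε := by
  obtain ⟨S, hrS, hSR⟩ := exists_between hrR
  obtain ⟨s, hrs, hsS⟩ := exists_between hrS
  lift S to NNReal using hr.trans hrS.le
  lift s to NNReal using hr.trans hrs.le
  have hseries := (hf.mono (Metric.closedBall_subset_ball hSR)).hasFPowerSeriesOnBall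
    (hr.trans_lt hrS)
  set p := cauchyPowerSeries f 0 S
  obtain ⟨m, hm⟩ := (Metric.tendstoUniformlyOn_iff.1
    (hseries.tendstoUniformlyOn (ENNReal.coe_lt_coe.2 hsS)) ε hε).exists
  refine ⟨∑ k ∈ Finset.range m, Polynomial.C (p.coeff k) * Polynomial.X ^ k, fun z hz => ?_⟩
  have hpartial : p.partialSum m z =
      (∑ k ∈ Finset.range m, Polynomial.C (p.coeff k) * Polynomial.X ^ k).eval z := by
    rw [FormalMultilinearSeries.partialSum, Polynomial.eval_finsetSum]
    refine Finset.sum_congr rfl fun k _ => ?_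
    rw [FormalMultilinearSeries.apply_eq_pow_smul_coeff, smul_eq_mul, mul_comm]
    simp
  have hnear := hm z (mem_ball_zero_iff.2 (hz.trans_lt hrs))
  rw [zero_add] at hnear
  rw [← hpartial, ← dist_eq_norm]
  exact hnear.le

lemma continuousOn_closedBall_of_diffContOnCl {f : ℂ → ℂ}
    (hf : DiffContOnCl ℂ f (Metric.ball 0 1)) : ContinuousOn f (Metric.closedBall 0 1) := by
  simpa only [closure_ball _ one_ne_zero] using hf.continuousOn

lemma exists_dilation_near {f : ℂ → ℂ} (hf : ContinuousOn f (Metric.closedBall 0 1)) {ε : ℝ}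
    (hε : 0 < ε) : ∃ t : ℝ, 0 < t ∧ t < 1 ∧ ∀ z : ℂ, ‖z‖ ≤ 1 → ‖f z - f (t * z)‖ ≤ ε := by
  obtain ⟨δ, hδ, hfδ⟩ := Metric.uniformContinuousOn_iff.1
    ((isCompact_closedBall (0 : ℂ) 1).uniformContinuousOn_of_continuous hf) ε hε
  obtain ⟨σ, hσ0, hσ⟩ : ∃ σ : ℝ, 0 < σ ∧ σ < min δ 1 := exists_between (by positivity)
  obtain ⟨hσδ, hσ1⟩ := lt_min_iff.1 hσ
  refine ⟨1 - σ, by linarith, by linarith, fun z hz => ?_⟩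
  rw [← dist_eq_norm]
  refine (hfδ z (by simpa using hz) _ ?_ ?_).le
  · rw [mem_closedBall_zero_iff, norm_mul, Complex.norm_real, Real.norm_of_nonneg (by linarith)]
    exact mul_le_one₀ (by linarith) (norm_nonneg z) hz
  · calc dist z ((1 - σ : ℝ) * z) = ‖(σ : ℂ) * z‖ := by
          rw [dist_eq_norm]; congr 1; push_cast; ring
      _ ≤ σ := by
          rw [norm_mul, Complex.norm_real, Real.norm_of_nonneg hσ0.le]
          exact mul_le_of_le_one_right hσ0.le hz
      _ < δ := hσδ

lemma exists_polynomial_near_of_diffContOnCl {f : ℂ → ℂ}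
    (hf : DiffContOnCl ℂ f (Metric.ball 0 1)) {ε : ℝ} (hε : 0 < ε) :
    ∃ P : Polynomial ℂ, ∀ z, ‖z‖ ≤ 1 → ‖f z - P.eval z‖ ≤ ε := by
  obtain ⟨t, ht0, ht1, ht⟩ :=
    exists_dilation_near (continuousOn_closedBall_of_diffContOnCl hf) (half_pos hε)
  obtain ⟨P, hP⟩ := exists_polynomial_near_of_differentiableOn_ball zero_le_one
    ((one_lt_inv₀ ht0).2 ht1) (f := fun z => f (t * z)) (by
      refine hf.differentiableOn.comp (by fun_prop) fun z hz => ?_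
      rw [mem_ball_zero_iff] at hz ⊢
      rw [norm_mul, Complex.norm_real, Real.norm_of_nonneg ht0.le]
      exact (lt_inv_mul_iff₀ ht0).1 (by simpa using hz)) (half_pos hε)
  refine ⟨P, fun z hz => (norm_sub_le_norm_sub_add_norm_sub _ (f (t * z)) _).trans ?_⟩
  linarith [ht z hz, hP z hz]

lemma integral_mul_eq_zero_of_forall_exists_near {X : Type*} [MeasurableSpace X] {ν : Measure X}
    {u h : X → ℂ} (hh : Integrable h ν)
    (hu : ∀ ε > 0, ∃ v : X → ℂ, (∀ᵐ x ∂ν, ‖u x - v x‖ ≤ ε) ∧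
      Integrable (fun x => v x * h x) ν ∧ ∫ x, v x * h x ∂ν = 0) :
    ∫ x, u x * h x ∂ν = 0 := by
  by_cases huh : Integrable (fun x => u x * h x) ν
  swap
  · exact integral_undef huh
  have hbound : ∀ ε > 0, ‖∫ x, u x * h x ∂ν‖ ≤ ε * ∫ x, ‖h x‖ ∂ν := fun ε hε => by
    obtain ⟨v, huv, hvh, hv⟩ := hu ε hε
    rw [← sub_zero (∫ x, u x * h x ∂ν), ← hv, ← integral_sub huh hvh, ← integral_const_mul]
    refine norm_integral_le_of_norm_le (hh.norm.const_mul ε) (huv.mono fun x hx => ?_)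
    rw [← sub_mul, norm_mul]
    gcongr
  have htendsto : Tendsto (fun ε : ℝ => ε * ∫ x, ‖h x‖ ∂ν) (nhdsWithin 0 (Set.Ioi 0)) (nhds 0) := by
    simpa using (tendsto_id.mul_const (∫ x, ‖h x‖ ∂ν)).mono_left
      (nhdsWithin_le_nhds (a := (0 : ℝ)) (s := Set.Ioi 0))
  exact norm_le_zero_iff.1 (ge_of_tendsto htendsto
    (eventually_nhdsWithin_of_forall fun ε hε => hbound ε hε))

end Approximation

section SineCompleteness

/-- Lebesgue measure on `(0, π)`, the upper half of the unit circle in the angle coordinate. -/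
abbrev halfCircle : Measure ℝ := volume.restrict (Set.Ioo 0 π)

lemma ae_halfCircle_sin_pos : ∀ᵐ θ ∂halfCircle, 0 < Real.sin θ :=
  (ae_restrict_mem measurableSet_Ioo).mono fun _ hθ => Real.sin_pos_of_mem_Ioo hθ

lemma span_range_chebyshev_U_eq_top :
    Submodule.span ℝ (Set.range fun n : ℕ => Polynomial.Chebyshev.U ℝ n) = ⊤ :=
  let S : Polynomial.Sequence ℝ :=
    ⟨fun n => Polynomial.Chebyshev.U ℝ n, Polynomial.Chebyshev.degree_U_natCast ℝ⟩
  S.span fun n => (Polynomial.leadingCoeff_ne_zero.2 (S.ne_zero n)).isUnit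

lemma integrable_ofReal_mul_halfCircle {φ : ℝ → ℝ} (hφ : Continuous φ) {f : ℝ → ℂ}
    (hf : Integrable f halfCircle) : Integrable (fun θ => (φ θ : ℂ) * f θ) halfCircle := by
  obtain ⟨C, hC⟩ := isCompact_Icc.exists_bound_of_continuousOn (s := Set.Icc 0 π) hφ.continuousOn
  refine hf.bdd_mul (c := C) (by fun_prop) ?_
  filter_upwards [ae_restrict_mem measurableSet_Ioo] with θ hθ
  simpa using hC θ (Set.Ioo_subset_Icc_self hθ)

lemma integral_polynomial_cos_mul_eq_zero {f : ℝ → ℂ} (hf : Integrable f halfCircle)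
    (hsin : ∀ n : ℕ, ∫ θ, (Real.sin ((n + 1) * θ) : ℂ) * f θ ∂halfCircle = 0)
    (P : Polynomial ℝ) :
    ∫ θ, ((P.eval (Real.cos θ) : ℝ) : ℂ) * ((Real.sin θ : ℂ) * f θ) ∂halfCircle = 0 := by
  have hint : ∀ Q : Polynomial ℝ, Integrable
      (fun θ => ((Q.eval (Real.cos θ) : ℝ) : ℂ) * ((Real.sin θ : ℂ) * f θ)) halfCircle := fun Q =>
    integrable_ofReal_mul_halfCircle (by fun_prop)
      (integrable_ofReal_mul_halfCircle Real.continuous_sin hf)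
  have hP : P ∈ Submodule.span ℝ (Set.range fun n : ℕ => Polynomial.Chebyshev.U ℝ n) := by
    rw [span_range_chebyshev_U_eq_top]; trivial
  induction hP using Submodule.span_induction with
  | mem Q hQ =>
    obtain ⟨n, rfl⟩ := hQ
    rw [← hsin n]
    congr with θ
    rw [← mul_assoc, ← Complex.ofReal_mul, Polynomial.Chebyshev.U_real_cos]
    simp
  | zero => simp
  | add Q R _ _ hQ hR =>
    simp only [Polynomial.eval_add, Complex.ofReal_add, add_mul]
    rw [integral_add (hint Q) (hint R), hQ, hR, add_zero]
  | smul a Q _ hQ =>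
    simp only [Polynomial.eval_smul, smul_eq_mul, Complex.ofReal_mul, mul_assoc]
    rw [integral_const_mul, hQ, mul_zero]

lemma integral_continuous_mul_eq_zero {g : ℝ → ℂ} (hg : Integrable g halfCircle)
    (hpoly : ∀ P : Polynomial ℝ, ∫ θ, ((P.eval (Real.cos θ) : ℝ) : ℂ) * g θ ∂halfCircle = 0)
    {φ : ℝ → ℝ} (hφ : Continuous φ) : ∫ θ, (φ θ : ℂ) * g θ ∂halfCircle = 0 := by
  refine integral_mul_eq_zero_of_forall_exists_near hg fun ε hε => ?_
  obtain ⟨P, hP⟩ := exists_polynomial_near_of_continuousOn (-1) 1 (φ ∘ Real.arccos)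
    (hφ.comp Real.continuous_arccos).continuousOn ε hε
  refine ⟨fun θ => ((P.eval (Real.cos θ) : ℝ) : ℂ), ?_,
    integrable_ofReal_mul_halfCircle (by fun_prop) hg, hpoly P⟩
  filter_upwards [ae_restrict_mem measurableSet_Ioo] with θ hθ
  have hnear := hP (Real.cos θ) ⟨Real.neg_one_le_cos θ, Real.cos_le_one θ⟩
  rw [Function.comp_apply, Real.arccos_cos hθ.1.le hθ.2.le, abs_sub_comm] at hnear
  rw [← Complex.ofReal_sub, Complex.norm_real]
  exact hnear.le

lemma ae_eq_zero_of_integral_continuous_mul {g : ℝ → ℂ} (hg : Integrable g halfCircle)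
    (hcont : ∀ φ : ℝ → ℝ, Continuous φ → ∫ θ, (φ θ : ℂ) * g θ ∂halfCircle = 0) :
    ∀ᵐ θ ∂halfCircle, g θ = 0 := by
  have hzero : ∀ᵐ θ, θ ∈ Set.Ioo 0 π → g θ = 0 := by
    refine isOpen_Ioo.ae_eq_zero_of_integral_contDiff_smul_eq_zero
      (IntegrableOn.locallyIntegrableOn hg) fun φ hφ _ hsupp => ?_
    rw [← hcont φ hφ.continuous, ← setIntegral_eq_integral_of_forall_compl_eq_zero
      (s := Set.Ioo 0 π) fun θ hθ => by
        rw [image_eq_zero_of_notMem_tsupport fun h => hθ (hsupp h), zero_smul]]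
    simp only [Complex.real_smul]
  exact (ae_restrict_iff' measurableSet_Ioo).2 hzero

lemma ae_eq_zero_of_integral_sin_mul {f : ℝ → ℂ} (hf : Integrable f halfCircle)
    (hsin : ∀ n : ℕ, ∫ θ, (Real.sin ((n + 1) * θ) : ℂ) * f θ ∂halfCircle = 0) :
    ∀ᵐ θ ∂halfCircle, f θ = 0 := by
  have hint := integrable_ofReal_mul_halfCircle Real.continuous_sin hf
  filter_upwards [ae_halfCircle_sin_pos, ae_eq_zero_of_integral_continuous_mul hint fun φ hφ =>
    integral_continuous_mul_eq_zero hint (integral_polynomial_cos_mul_eq_zero hf hsin) hφ]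
    with θ hpos hzero
  exact (mul_eq_zero.1 hzero).resolve_left (Complex.ofReal_ne_zero.2 hpos.ne')

end SineCompleteness

section UnitCircle

lemma circleExp_re (θ : ℝ) : (Circle.exp θ : ℂ).re = Real.cos θ := by
  rw [Circle.coe_exp, Complex.exp_ofReal_mul_I_re]

lemma circleExp_im (θ : ℝ) : (Circle.exp θ : ℂ).im = Real.sin θ := by
  rw [Circle.coe_exp, Complex.exp_ofReal_mul_I_im]

lemma circleExp_pow (θ : ℝ) (n : ℕ) : (Circle.exp θ : ℂ) ^ n = Circle.exp (n * θ) := by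
  rw [Circle.coe_exp, Circle.coe_exp, ← Complex.exp_nat_mul]
  push_cast
  ring_nf

lemma conj_circleExp (θ : ℝ) : conj (Circle.exp θ : ℂ) = Circle.exp (-θ) := by
  rw [Circle.exp_neg, Circle.coe_inv_eq_conj]

lemma circleExp_two_pi_sub (θ : ℝ) : (Circle.exp (2 * π - θ) : ℂ) = conj (Circle.exp θ : ℂ) := by
  rw [conj_circleExp, sub_eq_neg_add, Circle.periodic_exp]

lemma one_sub_circleExp_sq (θ : ℝ) :
    1 - (Circle.exp θ : ℂ) ^ 2 = -2 * Complex.I * Circle.exp θ * Real.sin θ := by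
  have hsin := Complex.sub_conj (Circle.exp θ : ℂ)
  have hmul : (Circle.exp θ : ℂ) * conj (Circle.exp θ : ℂ) = 1 := by
    rw [Complex.mul_conj', Circle.norm_coe, Complex.ofReal_one, one_pow]
  rw [circleExp_im, Complex.ofReal_mul, Complex.ofReal_ofNat] at hsin
  linear_combination -(Circle.exp θ : ℂ) * hsin - hmul

lemma continuous_comp_circleExp {f : ℂ → ℂ} (hf : DiffContOnCl ℂ f (Metric.ball 0 1)) :
    Continuous fun θ => f (Circle.exp θ) :=
  (continuousOn_closedBall_of_diffContOnCl hf).comp_continuous (by fun_prop) fun θ => by simp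

lemma integral_two_pi_of_conj_symm {f u : ℝ → ℂ} (hu : Continuous u)
    (hupper : ∀ θ ∈ Set.Ioo 0 π, f θ = u θ)
    (hlower : ∀ θ ∈ Set.Ioo 0 π, f (2 * π - θ) = conj (u θ)) :
    ∫ θ in (0 : ℝ)..(2 * π), f θ = ((2 * ∫ θ in (0 : ℝ)..π, (u θ).re : ℝ) : ℂ) := by
  have hpi := Real.pi_pos
  have hconj : Continuous fun θ => conj (u θ) := Complex.continuous_conj.comp hu
  have hreflected : Continuous fun θ => conj (u (2 * π - θ)) := hconj.comp (by fun_prop)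
  have hleft : Set.EqOn f u (Set.uIoo 0 π) := by rwa [Set.uIoo_of_le hpi.le]
  have hright : Set.EqOn f (fun θ => conj (u (2 * π - θ))) (Set.uIoo π (2 * π)) := by
    rw [Set.uIoo_of_le (by linarith)]
    intro θ hθ
    simpa using hlower (2 * π - θ) ⟨by linarith [hθ.2], by linarith [hθ.1]⟩
  rw [← intervalIntegral.integral_add_adjacent_intervals
      ((hu.intervalIntegrable 0 π).congr_uIoo hleft.symm)
      ((hreflected.intervalIntegrable π (2 * π)).congr_uIoo hright.symm),
    intervalIntegral.integral_congr_uIoo hleft, intervalIntegral.integral_congr_uIoo hright,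
    intervalIntegral.integral_comp_sub_left (fun θ => conj (u θ)), sub_self,
    show 2 * π - π = π by ring,
    ← intervalIntegral.integral_add (hu.intervalIntegrable _ _) (hconj.intervalIntegrable _ _),
    ← intervalIntegral.integral_const_mul, ← intervalIntegral.integral_ofReal]
  simp only [Complex.add_conj]

end UnitCircle

section SquareRoot

/-- The branch of `√(1 - z²)` on the closed unit disc that equals `1` at the origin. -/
def sqrtOneSubSq (z : ℂ) : ℂ := (1 - z ^ 2) ^ (2⁻¹ : ℂ)

lemma sqrtOneSubSq_sq (z : ℂ) : sqrtOneSubSq z ^ 2 = 1 - z ^ 2 :=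
  Complex.cpow_ofNat_inv_pow _ _

lemma sqrtOneSubSq_zero : sqrtOneSubSq 0 = 1 := by
  simp [sqrtOneSubSq]

lemma re_one_sub_sq_nonneg {z : ℂ} (hz : ‖z‖ ≤ 1) : 0 ≤ (1 - z ^ 2).re := by
  have hsq : (z ^ 2).re ≤ 1 := (Complex.re_le_norm _).trans (by
    rw [norm_pow]
    exact pow_le_one₀ (norm_nonneg z) hz)
  simpa using hsq

lemma re_one_sub_sq_pos {z : ℂ} (hz : ‖z‖ < 1) : 0 < (1 - z ^ 2).re := by
  have hsq : (z ^ 2).re < 1 := (Complex.re_le_norm _).trans_lt (by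
    rw [norm_pow]
    exact pow_lt_one₀ (norm_nonneg z) hz two_ne_zero)
  simpa using hsq

lemma sqrtOneSubSq_conj {z : ℂ} (hz : ‖z‖ ≤ 1) :
    sqrtOneSubSq (conj z) = conj (sqrtOneSubSq z) := by
  have harg : (1 - z ^ 2).arg ≠ π := fun h =>
    ((Complex.arg_eq_pi_iff.1 h).1.trans_le (re_one_sub_sq_nonneg hz)).false
  simpa [sqrtOneSubSq, map_ofNat] using Complex.conj_cpow (1 - z ^ 2) 2⁻¹ harg

lemma diffContOnCl_sqrtOneSubSq : DiffContOnCl ℂ sqrtOneSubSq (Metric.ball 0 1) := by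
  refine ⟨fun z hz => ?_, fun z hz => ?_⟩
  · rw [mem_ball_zero_iff] at hz
    have hslit : 1 - z ^ 2 ∈ Complex.slitPlane := Or.inl (re_one_sub_sq_pos hz)
    exact (DifferentiableAt.cpow_const (f := fun z : ℂ => 1 - z ^ 2)
      (by fun_prop) hslit).differentiableWithinAt
  · rw [closure_ball _ one_ne_zero, mem_closedBall_zero_iff] at hz
    have hcpow := Complex.continuousAt_cpow_const_of_re_pos (z := 1 - z ^ 2) (w := 2⁻¹)
      (Or.inl (re_one_sub_sq_nonneg hz)) (by norm_num)
    exact (hcpow.comp (f := fun z : ℂ => 1 - z ^ 2) (by fun_prop)).continuousWithinAt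

end SquareRoot

section PlusFactor

/-- A plus factor in the sense of Wiener-Hopf factorization: a zero-free function of the disc
algebra, here with real Taylor coefficients and normalized at the origin. -/
structure IsPlusFactor (c : ℂ → ℂ) : Prop where
  diffContOnCl : DiffContOnCl ℂ c (Metric.ball 0 1)
  ne_zero : ∀ z : ℂ, ‖z‖ ≤ 1 → c z ≠ 0
  map_conj : ∀ z : ℂ, ‖z‖ ≤ 1 → c (conj z) = conj (c z)
  map_zero : c 0 = 1

variable {c : ℂ → ℂ}

lemma IsPlusFactor.inv (hc : IsPlusFactor c) : IsPlusFactor c⁻¹ where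
  diffContOnCl := hc.diffContOnCl.inv fun z hz => hc.ne_zero z (by
    simpa only [closure_ball _ one_ne_zero, mem_closedBall_zero_iff] using hz)
  ne_zero z hz := inv_ne_zero (hc.ne_zero z hz)
  map_conj z hz := by simp [hc.map_conj z hz]
  map_zero := by simp [hc.map_zero]

/-- The function `c(z) √(1 - z²)`; on the unit circle its squared modulus is the weight
`2 |c|² |sin θ|`, so it is the Szegő function of that weight. -/
def szego (c : ℂ → ℂ) (z : ℂ) : ℂ := c z * sqrtOneSubSq z

lemma IsPlusFactor.szego_zero (hc : IsPlusFactor c) : szego c 0 = 1 := by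
  rw [szego, hc.map_zero, sqrtOneSubSq_zero, one_mul]

lemma IsPlusFactor.szego_conj (hc : IsPlusFactor c) {z : ℂ} (hz : ‖z‖ ≤ 1) :
    szego c (conj z) = conj (szego c z) := by
  rw [szego, szego, hc.map_conj z hz, sqrtOneSubSq_conj hz, map_mul]

lemma IsPlusFactor.diffContOnCl_szego (hc : IsPlusFactor c) :
    DiffContOnCl ℂ (szego c) (Metric.ball 0 1) :=
  hc.diffContOnCl.smul diffContOnCl_sqrtOneSubSq

lemma IsPlusFactor.szego_mul_szego_inv (hc : IsPlusFactor c) {z : ℂ} (hz : ‖z‖ ≤ 1) :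
    szego c z * szego c⁻¹ z = 1 - z ^ 2 := by
  have hne := hc.ne_zero z hz
  rw [← sqrtOneSubSq_sq, szego, szego, Pi.inv_apply]
  field_simp

lemma sq_norm_szego_circleExp (c : ℂ → ℂ) {θ : ℝ} (hθ : 0 ≤ Real.sin θ) :
    ‖szego c (Circle.exp θ)‖ ^ 2 = 2 * ‖c (Circle.exp θ)‖ ^ 2 * Real.sin θ := by
  rw [szego, norm_mul, mul_pow, ← norm_pow (sqrtOneSubSq _), sqrtOneSubSq_sq,
    one_sub_circleExp_sq]
  simp only [norm_mul, norm_neg, Complex.norm_I, Circle.norm_coe, Complex.norm_real,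
    Real.norm_of_nonneg hθ, Complex.norm_ofNat]
  ring

lemma IsPlusFactor.szego_circleExp_ne_zero (hc : IsPlusFactor c) {θ : ℝ} (hθ : 0 < Real.sin θ) :
    szego c (Circle.exp θ) ≠ 0 := by
  have hcpos := norm_pos_iff.2 (hc.ne_zero _ (Circle.norm_coe (Circle.exp θ)).le)
  have hsq : 0 < ‖szego c (Circle.exp θ)‖ ^ 2 := by
    rw [sq_norm_szego_circleExp c hθ.le]
    positivity
  exact norm_ne_zero_iff.1 (pow_ne_zero_iff two_ne_zero |>.1 hsq.ne')

/-- The unimodular function `n / |n|` on the unit circle, where `n = szego c`. -/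
def phase (c : ℂ → ℂ) (θ : ℝ) : ℂ := szego c (Circle.exp θ) / ‖szego c (Circle.exp θ)‖

lemma norm_phase_le_one (c : ℂ → ℂ) (θ : ℝ) : ‖phase c θ‖ ≤ 1 := by
  simpa [phase] using div_self_le_one ‖szego c (Circle.exp θ)‖

lemma IsPlusFactor.norm_phase (hc : IsPlusFactor c) {θ : ℝ} (hθ : 0 < Real.sin θ) :
    ‖phase c θ‖ = 1 := by
  rw [phase, norm_div, Complex.norm_real, norm_norm,
    div_self (norm_ne_zero_iff.2 (hc.szego_circleExp_ne_zero hθ))]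

lemma phase_mul_norm_szego (c : ℂ → ℂ) (θ : ℝ) :
    phase c θ * ‖szego c (Circle.exp θ)‖ = szego c (Circle.exp θ) :=
  div_mul_cancel_of_imp fun h => norm_eq_zero.1 (Complex.ofReal_eq_zero.1 h)

lemma IsPlusFactor.phase_sq (hc : IsPlusFactor c) {θ : ℝ} (hθ : 0 < Real.sin θ) :
    phase c θ ^ 2 =
      -Complex.I * (c (Circle.exp θ) / conj (c (Circle.exp θ))) * Circle.exp θ := by
  have hne := hc.ne_zero _ (Circle.norm_coe (Circle.exp θ)).le
  have hconj : conj (c (Circle.exp θ)) ≠ 0 := (map_ne_zero _).2 hne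
  have hsin : (Real.sin θ : ℂ) ≠ 0 := Complex.ofReal_ne_zero.2 hθ.ne'
  rw [phase, div_pow, ← Complex.ofReal_pow, sq_norm_szego_circleExp c hθ.le, szego, mul_pow,
    sqrtOneSubSq_sq, one_sub_circleExp_sq]
  rw [Complex.ofReal_mul, Complex.ofReal_mul, Complex.ofReal_pow, Complex.ofReal_ofNat,
    ← Complex.mul_conj']
  field_simp [hconj]

lemma IsPlusFactor.aestronglyMeasurable_phase (hc : IsPlusFactor c) :
    AEStronglyMeasurable (phase c) halfCircle := by
  have hcont := continuous_comp_circleExp hc.diffContOnCl_szego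
  refine ContinuousOn.aestronglyMeasurable (fun θ hθ => ?_) measurableSet_Ioo
  have hne := hc.szego_circleExp_ne_zero (Real.sin_pos_of_mem_Ioo hθ)
  exact (hcont.continuousAt.div (Complex.continuous_ofReal.comp hcont.norm).continuousAt
    (by simpa using hne)).continuousWithinAt

end PlusFactor

section Totality

variable {c F : ℂ → ℂ}

/-- The symmetrization `F(z) n(z)/|n(z)| + F(z̄) n(z̄)/|n(z)|`, `z = e^{iθ}`, `n = szego c`. For `F`
with real Taylor coefficients it is `2 Re (F n/|n|)`, but it depends complex-linearly on `F`. -/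
def symmetrize (c F : ℂ → ℂ) (θ : ℝ) : ℂ :=
  F (Circle.exp θ) * phase c θ + F (conj (Circle.exp θ : ℂ)) * conj (phase c θ)

lemma symmetrize_sub (c F G : ℂ → ℂ) (θ : ℝ) :
    symmetrize c F θ - symmetrize c G θ = symmetrize c (F - G) θ := by
  simp only [symmetrize, Pi.sub_apply]
  ring

lemma symmetrize_eq_ofReal (c : ℂ → ℂ) {θ : ℝ}
    (hF : F (conj (Circle.exp θ : ℂ)) = conj (F (Circle.exp θ))) :
    symmetrize c F θ = ((2 * (F (Circle.exp θ) * phase c θ).re : ℝ) : ℂ) := by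
  rw [symmetrize, hF, ← map_mul, Complex.add_conj]

lemma norm_symmetrize_le (c : ℂ → ℂ) {C : ℝ} (hF : ∀ z : ℂ, ‖z‖ ≤ 1 → ‖F z‖ ≤ C) (θ : ℝ) :
    ‖symmetrize c F θ‖ ≤ 2 * C := by
  have hbound : ∀ z w : ℂ, ‖z‖ ≤ 1 → ‖w‖ ≤ 1 → ‖F z * w‖ ≤ C := fun z w hz hw => by
    rw [norm_mul]
    exact (mul_le_of_le_one_right (norm_nonneg _) hw).trans (hF z hz)
  have hphase := norm_phase_le_one c θ
  rw [two_mul]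
  exact norm_add_le_of_le (hbound _ _ (by simp) hphase) (hbound _ _ (by simp) (by simpa))

lemma IsPlusFactor.integrable_symmetrize_mul (hc : IsPlusFactor c)
    (hF : DiffContOnCl ℂ F (Metric.ball 0 1)) {h : ℝ → ℂ} (hh : Integrable h halfCircle) :
    Integrable (fun θ => symmetrize c F θ * h θ) halfCircle := by
  have hFc := continuousOn_closedBall_of_diffContOnCl hF
  obtain ⟨C, hC⟩ := (isCompact_closedBall (0 : ℂ) 1).exists_bound_of_continuousOn hFc
  have hconj : Continuous fun θ => F (conj (Circle.exp θ : ℂ)) :=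
    hFc.comp_continuous (Complex.continuous_conj.comp (by fun_prop)) fun θ => by simp
  have hphase := hc.aestronglyMeasurable_phase
  refine hh.bdd_mul (((continuous_comp_circleExp hF).aestronglyMeasurable.mul hphase).add
    (hconj.aestronglyMeasurable.mul (Complex.continuous_conj.comp_aestronglyMeasurable hphase)))
    (Eventually.of_forall (norm_symmetrize_le c fun z hz => hC z (by simpa using hz)))

lemma IsPlusFactor.integral_symmetrize_polynomial_mul_eq_zero (hc : IsPlusFactor c) {h : ℝ → ℂ}
    (hh : Integrable h halfCircle)
    (horth : ∀ j : ℕ, ∫ θ, symmetrize c (fun z => z ^ j) θ * h θ ∂halfCircle = 0)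
    (P : Polynomial ℂ) : ∫ θ, symmetrize c (fun z => P.eval z) θ * h θ ∂halfCircle = 0 := by
  have hsum : ∀ θ : ℝ, symmetrize c (fun z => P.eval z) θ * h θ =
      ∑ k ∈ Finset.range (P.natDegree + 1),
        P.coeff k * (symmetrize c (fun z => z ^ k) θ * h θ) := fun θ => by
    simp only [symmetrize, Polynomial.eval_eq_sum_range, Finset.sum_mul, ← Finset.sum_add_distrib]
    exact Finset.sum_congr rfl fun k _ => by ring
  simp only [hsum]
  rw [integral_finsetSum _ fun k _ =>
    (hc.integrable_symmetrize_mul (differentiable_pow k).diffContOnCl hh).const_mul _]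
  simp only [integral_const_mul, horth, mul_zero, Finset.sum_const_zero]

lemma IsPlusFactor.integral_symmetrize_mul_eq_zero (hc : IsPlusFactor c) {h : ℝ → ℂ}
    (hh : Integrable h halfCircle)
    (horth : ∀ j : ℕ, ∫ θ, symmetrize c (fun z => z ^ j) θ * h θ ∂halfCircle = 0)
    (hF : DiffContOnCl ℂ F (Metric.ball 0 1)) :
    ∫ θ, symmetrize c F θ * h θ ∂halfCircle = 0 := by
  refine integral_mul_eq_zero_of_forall_exists_near hh fun ε hε => ?_
  obtain ⟨P, hP⟩ := exists_polynomial_near_of_diffContOnCl hF (half_pos hε)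
  refine ⟨symmetrize c fun z => P.eval z, Eventually.of_forall fun θ => ?_,
    hc.integrable_symmetrize_mul P.differentiable.diffContOnCl hh,
    hc.integral_symmetrize_polynomial_mul_eq_zero hh horth P⟩
  rw [symmetrize_sub]
  exact (norm_symmetrize_le c hP θ).trans_eq (mul_div_cancel₀ ε two_ne_zero)

lemma IsPlusFactor.symmetrize_pow_mul_szego_inv (hc : IsPlusFactor c) (j : ℕ) {θ : ℝ}
    (hθ : 0 < Real.sin θ) :
    symmetrize c (fun z => z ^ j * szego c⁻¹ z) θ =
      (Real.sin ((j + 1) * θ) : ℂ) * (2 * ‖szego c⁻¹ (Circle.exp θ)‖ : ℝ) := by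
  have hn := (Circle.norm_coe (Circle.exp θ)).le
  have hne := norm_ne_zero_iff.2 (hc.szego_circleExp_ne_zero hθ)
  have hprod := hc.szego_mul_szego_inv hn
  rw [one_sub_circleExp_sq] at hprod
  have hnorm : ‖szego c (Circle.exp θ)‖ * ‖szego c⁻¹ (Circle.exp θ)‖ = 2 * Real.sin θ := by
    rw [← norm_mul, hprod]
    simp only [norm_mul, norm_neg, Complex.norm_I, Circle.norm_coe, Complex.norm_real,
      Real.norm_of_nonneg hθ.le, Complex.norm_ofNat, mul_one]
  have hre : ((Circle.exp θ : ℂ) ^ j * szego c⁻¹ (Circle.exp θ) * phase c θ).re =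
      Real.sin ((j + 1) * θ) * ‖szego c⁻¹ (Circle.exp θ)‖ := by
    have hpow : (Circle.exp θ : ℂ) ^ j * szego c⁻¹ (Circle.exp θ) * szego c (Circle.exp θ) =
        ((2 * Real.sin θ : ℝ) : ℂ) * (-Complex.I * (Circle.exp θ : ℂ) ^ (j + 1)) := by
      rw [Complex.ofReal_mul, Complex.ofReal_ofNat]
      linear_combination (Circle.exp θ : ℂ) ^ j * hprod
    rw [phase, ← mul_div_assoc, Complex.div_ofReal_re, div_eq_iff hne, hpow, Complex.re_ofReal_mul,
      ← hnorm, circleExp_pow, neg_mul, Complex.neg_re, Complex.I_mul_re, circleExp_im]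
    push_cast
    ring
  rw [symmetrize_eq_ofReal c (by rw [hc.inv.szego_conj hn, map_mul, map_pow]), hre]
  push_cast
  ring

lemma IsPlusFactor.ae_eq_zero_of_integral_symmetrize_mul (hc : IsPlusFactor c) {h : ℝ → ℂ}
    (hh : Integrable h halfCircle)
    (horth : ∀ j : ℕ, ∫ θ, symmetrize c (fun z => z ^ j) θ * h θ ∂halfCircle = 0) :
    ∀ᵐ θ ∂halfCircle, h θ = 0 := by
  have hinv := hc.inv.diffContOnCl_szego
  have hint : Integrable
      (fun θ => ((2 * ‖szego c⁻¹ (Circle.exp θ)‖ : ℝ) : ℂ) * h θ) halfCircle :=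
    integrable_ofReal_mul_halfCircle (continuous_const.mul (continuous_comp_circleExp hinv).norm) hh
  have hzero := ae_eq_zero_of_integral_sin_mul hint fun j => by
    rw [← hc.integral_symmetrize_mul_eq_zero (F := fun z => z ^ j * szego c⁻¹ z) hh horth
      ((differentiable_pow j).diffContOnCl.smul hinv)]
    refine integral_congr_ae (ae_halfCircle_sin_pos.mono fun θ hθ => ?_)
    simp only [← mul_assoc, ← hc.symmetrize_pow_mul_szego_inv j hθ]
  filter_upwards [hzero, ae_halfCircle_sin_pos] with θ hmul hθ
  have hpos := norm_pos_iff.2 (hc.inv.szego_circleExp_ne_zero hθ)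
  exact (mul_eq_zero.1 hmul).resolve_left (Complex.ofReal_ne_zero.2 (by positivity))

end Totality

section Biorthogonality

variable {c : ℂ → ℂ}

/-- The symbol `c(1/z) c(z)⁻¹ χ(z)`, as a function of the angle. -/
def symbol (c : ℂ → ℂ) (θ : ℝ) : ℂ :=
  c (Complex.exp (-(Complex.I * θ))) * (c (Complex.exp (Complex.I * θ)))⁻¹ * chi θ

lemma IsPlusFactor.symbol_eq (hc : IsPlusFactor c) (θ : ℝ) :
    symbol c θ = conj (c (Circle.exp θ)) / c (Circle.exp θ) * chi θ := by
  have hexp : Complex.exp (Complex.I * θ) = Circle.exp θ := by rw [Circle.coe_exp, mul_comm]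
  have hneg : Complex.exp (-(Complex.I * θ)) = conj (Circle.exp θ : ℂ) := by
    rw [Complex.exp_neg, hexp, ← Circle.coe_inv, Circle.coe_inv_eq_conj]
  rw [symbol, hexp, hneg, hc.map_conj _ (by simp), div_eq_mul_inv]

lemma chi_two_pi_sub_of_mem_Ioo {θ : ℝ} (hθ : θ ∈ Set.Ioo 0 π) :
    chi (2 * π - θ) = -Complex.I := by
  rw [chi, Real.sin_two_pi_sub, if_neg (by linarith [Real.sin_pos_of_mem_Ioo hθ])]

lemma IsPlusFactor.continuous_div_conj_circleExp (hc : IsPlusFactor c) :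
    Continuous fun θ => c (Circle.exp θ) / conj (c (Circle.exp θ)) := by
  have hcont := continuous_comp_circleExp hc.diffContOnCl
  exact hcont.div (Complex.continuous_conj.comp hcont) fun θ =>
    (map_ne_zero _).2 (hc.ne_zero _ (by simp))

lemma IsPlusFactor.fc_symbol (hc : IsPlusFactor c) (n : ℕ) :
    fc (symbol c) n = ((1 / π * ∫ θ in (0 : ℝ)..π,
      (-Complex.I * (c (Circle.exp θ) / conj (c (Circle.exp θ))) *
        (Circle.exp θ : ℂ) ^ n).re : ℝ) : ℂ) := by
  have hchar : ∀ θ : ℝ, Complex.exp (-(Complex.I * ((n : ℤ) : ℂ) * θ)) =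
      conj (Circle.exp θ : ℂ) ^ n := fun θ => by
    rw [conj_circleExp, circleExp_pow, Circle.coe_exp]
    push_cast
    ring_nf
  set u : ℝ → ℂ := fun θ =>
    -Complex.I * (c (Circle.exp θ) / conj (c (Circle.exp θ))) * (Circle.exp θ : ℂ) ^ n
  have hu : Continuous u := by
    have hratio := hc.continuous_div_conj_circleExp
    fun_prop
  have hint := integral_two_pi_of_conj_symm (f := fun θ =>
      symbol c θ * Complex.exp (-(Complex.I * ((n : ℤ) : ℂ) * θ)))
    (Complex.continuous_conj.comp hu) (fun θ hθ => by
      rw [hchar, hc.symbol_eq, chi, if_pos (Real.sin_pos_of_mem_Ioo hθ)]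
      simp only [u, Function.comp_apply, map_mul, map_div₀, map_neg, map_pow, Complex.conj_I,
        Complex.conj_conj]
      ring) fun θ hθ => by
      rw [hchar, hc.symbol_eq, chi_two_pi_sub_of_mem_Ioo hθ, circleExp_two_pi_sub,
        hc.map_conj _ (by simp)]
      simp only [u, Function.comp_apply, Complex.conj_conj]
      ring
  rw [fc, hint, ← Complex.ofReal_mul]
  congr 1
  simp only [Function.comp_apply, Complex.conj_re, u]
  ring

lemma integral_cos_int_mul (m : ℤ) :
    ∫ θ in (0 : ℝ)..π, Real.cos (m * θ) = if m = 0 then π else 0 := by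
  split_ifs with hm
  · simp [hm]
  · rw [intervalIntegral.integral_comp_mul_left (fun x => Real.cos x) (Int.cast_ne_zero.2 hm),
      integral_cos]
    simp [Real.sin_int_mul_pi]

/-- The functions `√(2/π) Re (z^j n(z)/|n(z)|)`, `n = szego c`, whose Gram matrix is
`I + H(symbol c)`. -/
def phaseWave (c : ℂ → ℂ) (j : ℕ) (θ : ℝ) : ℝ :=
  Real.sqrt (2 / π) * ((Circle.exp θ : ℂ) ^ j * phase c θ).re

/-- The functions `|n(z)| (2 cos θ)^l / √(2π)`, `n = szego c`, whose Gram matrix is the Hankel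
matrix of the moments of `|c|²`. -/
def weightedCosPow (c : ℂ → ℂ) (l : ℕ) (θ : ℝ) : ℝ :=
  (Real.sqrt (2 * π))⁻¹ * (‖szego c (Circle.exp θ)‖ * (2 * Real.cos θ) ^ l)

lemma two_mul_re_mul_re (z w : ℂ) : 2 * (z.re * w.re) = (z * w).re + (z * conj w).re := by
  simp only [Complex.mul_re, Complex.conj_re, Complex.conj_im]
  ring

lemma IsPlusFactor.phaseWave_mul_phaseWave (hc : IsPlusFactor c) (j k : ℕ) {θ : ℝ}
    (hθ : 0 < Real.sin θ) :
    phaseWave c j θ * phaseWave c k θ =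
      1 / π * (Real.cos ((j - k : ℤ) * θ) +
        (-Complex.I * (c (Circle.exp θ) / conj (c (Circle.exp θ))) *
          (Circle.exp θ : ℂ) ^ (j + k + 1)).re) := by
  have hconst : Real.sqrt (2 / π) * Real.sqrt (2 / π) = 2 / π :=
    Real.mul_self_sqrt (by positivity)
  have hphase : phase c θ * conj (phase c θ) = 1 := by
    rw [Complex.mul_conj', hc.norm_phase hθ, Complex.ofReal_one, one_pow]
  have hsum : (Circle.exp θ : ℂ) ^ j * phase c θ * ((Circle.exp θ : ℂ) ^ k * phase c θ) =
      -Complex.I * (c (Circle.exp θ) / conj (c (Circle.exp θ))) *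
        (Circle.exp θ : ℂ) ^ (j + k + 1) := by
    linear_combination (Circle.exp θ : ℂ) ^ (j + k) * hc.phase_sq hθ
  have hdiff : (Circle.exp θ : ℂ) ^ j * phase c θ * conj ((Circle.exp θ : ℂ) ^ k * phase c θ) =
      Circle.exp ((j - k : ℤ) * θ) := by
    rw [map_mul, mul_mul_mul_comm, hphase, mul_one, map_pow, conj_circleExp, circleExp_pow,
      circleExp_pow, ← Circle.coe_mul, ← Circle.exp_add]
    congr 2
    push_cast
    ring
  rw [phaseWave, phaseWave, mul_mul_mul_comm, hconst, add_comm, ← hsum, ← circleExp_re, ← hdiff]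
  linear_combination (1 / π) * two_mul_re_mul_re
    ((Circle.exp θ : ℂ) ^ j * phase c θ) ((Circle.exp θ : ℂ) ^ k * phase c θ)

lemma IsPlusFactor.integral_phaseWave_mul_phaseWave (hc : IsPlusFactor c) (j k : ℕ) :
    ((∫ θ, phaseWave c j θ * phaseWave c k θ ∂halfCircle : ℝ) : ℂ) =
      (if j = k then 1 else 0) + fc (symbol c) ((j : ℤ) + k + 1) := by
  have hratio := hc.continuous_div_conj_circleExp
  rw [integral_congr_ae (ae_halfCircle_sin_pos.mono fun θ => hc.phaseWave_mul_phaseWave j k),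
    integral_const_mul, ← integral_Ioc_eq_integral_Ioo,
    ← intervalIntegral.integral_of_le Real.pi_pos.le,
    intervalIntegral.integral_add (Continuous.intervalIntegrable (by fun_prop) _ _)
      (Continuous.intervalIntegrable (by fun_prop) _ _), mul_add, Complex.ofReal_add,
    show (j : ℤ) + k + 1 = ((j + k + 1 : ℕ) : ℤ) by push_cast; rfl, hc.fc_symbol]
  congr 1
  have hcos := integral_cos_int_mul (j - k)
  push_cast at hcos ⊢
  rw [hcos]
  simp only [sub_eq_zero, Nat.cast_inj]
  split_ifs <;> simp

lemma phaseWave_mul_weightedCosPow (c : ℂ → ℂ) (j l : ℕ) (θ : ℝ) :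
    phaseWave c j θ * weightedCosPow c l θ =
      1 / π * ((Circle.exp θ : ℂ) ^ j * ((2 * Real.cos θ : ℝ) : ℂ) ^ l *
        szego c (Circle.exp θ)).re := by
  have hconst : Real.sqrt (2 / π) * (Real.sqrt (2 * π))⁻¹ = 1 / π := by
    rw [← Real.sqrt_inv, ← Real.sqrt_mul (by positivity),
      ← Real.sqrt_sq (x := 1 / π) (by positivity)]
    congr 1
    field_simp
  have hfactor : (Circle.exp θ : ℂ) ^ j * ((2 * Real.cos θ : ℝ) : ℂ) ^ l *
      szego c (Circle.exp θ) = ((‖szego c (Circle.exp θ)‖ * (2 * Real.cos θ) ^ l : ℝ) : ℂ) *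
        ((Circle.exp θ : ℂ) ^ j * phase c θ) := by
    rw [Complex.ofReal_mul ‖szego c (Circle.exp θ)‖, Complex.ofReal_pow]
    linear_combination -(Circle.exp θ : ℂ) ^ j * ((2 * Real.cos θ : ℝ) : ℂ) ^ l *
      phase_mul_norm_szego c θ
  rw [phaseWave, weightedCosPow, mul_mul_mul_comm, hconst, hfactor, Complex.re_ofReal_mul]
  ring

lemma integral_re_circleExp_of_map_conj {G : ℂ → ℂ} (hG : DiffContOnCl ℂ G (Metric.ball 0 1))
    (hconj : ∀ z : ℂ, ‖z‖ ≤ 1 → G (conj z) = conj (G z)) :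
    ((∫ θ in (0 : ℝ)..π, (G (Circle.exp θ)).re : ℝ) : ℂ) = π * G 0 := by
  have havg := DiffContOnCl.circleAverage (R := 1) (c := 0) (by rwa [abs_one])
  have hcircle : (fun θ => G (circleMap 0 1 θ)) = fun θ : ℝ => G (Circle.exp θ) := by
    funext θ
    simp [circleMap]
  rw [Real.circleAverage_def, hcircle, integral_two_pi_of_conj_symm
    (continuous_comp_circleExp hG) (fun θ _ => rfl) fun θ _ => by
      rw [circleExp_two_pi_sub, hconj _ (by simp)], Complex.real_smul] at havg
  rw [← havg, ← Complex.ofReal_mul, ← Complex.ofReal_mul]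
  congr 1
  field_simp

lemma IsPlusFactor.integral_phaseWave_mul_weightedCosPow (hc : IsPlusFactor c) {j l : ℕ}
    (hlj : l ≤ j) :
    ∫ θ, phaseWave c j θ * weightedCosPow c l θ ∂halfCircle = if l = j then 1 else 0 := by
  obtain ⟨d, rfl⟩ := Nat.exists_eq_add_of_le hlj
  have hG : ∀ θ : ℝ, (Circle.exp θ : ℂ) ^ (l + d) * ((2 * Real.cos θ : ℝ) : ℂ) ^ l *
      szego c (Circle.exp θ) = (Circle.exp θ : ℂ) ^ d * (1 + (Circle.exp θ : ℂ) ^ 2) ^ l *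
        szego c (Circle.exp θ) := fun θ => by
    have hcos : (Circle.exp θ : ℂ) * ((2 * Real.cos θ : ℝ) : ℂ) = 1 + (Circle.exp θ : ℂ) ^ 2 := by
      rw [← circleExp_re, ← Complex.add_conj, mul_add, Complex.mul_conj', Circle.norm_coe]
      push_cast
      ring
    rw [← hcos]
    ring
  have hd : Differentiable ℂ fun z : ℂ => z ^ d * (1 + z ^ 2) ^ l := by fun_prop
  have hint := integral_re_circleExp_of_map_conj
    (G := fun z => z ^ d * (1 + z ^ 2) ^ l * szego c z)
    (hd.diffContOnCl.smul hc.diffContOnCl_szego) fun z hz => by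
      simp only [hc.szego_conj hz, map_mul, map_pow, map_add, map_one]
  simp only [phaseWave_mul_weightedCosPow, hG]
  rw [integral_const_mul, ← integral_Ioc_eq_integral_Ioo,
    ← intervalIntegral.integral_of_le Real.pi_pos.le, ← Complex.ofReal_inj, Complex.ofReal_mul,
    hint, hc.szego_zero]
  rcases d with _ | d
  · simp [Real.pi_ne_zero]
  · simp

lemma bmomR_eq_integral_cos {b : ℝ → ℝ} (hb : ContinuousOn b (Set.Icc (-1) 1)) (e : ℕ) :
    bmomR b e = 1 / π * ∫ θ in (0 : ℝ)..π, b (Real.cos θ) * (2 * Real.cos θ) ^ e * Real.sin θ := by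
  have hsub := intervalIntegral.integral_comp_mul_deriv'' (a := 0) (b := π)
    (f := Real.cos) (f' := fun θ => -Real.sin θ) (g := fun x => b x * (2 * x) ^ e)
    Real.continuous_cos.continuousOn (fun θ _ => (Real.hasDerivAt_cos θ).hasDerivWithinAt)
    (by fun_prop) ((hb.mul (by fun_prop)).mono (by
      rintro _ ⟨θ, -, rfl⟩
      exact Real.cos_mem_Icc θ))
  rw [Real.cos_zero, Real.cos_pi, intervalIntegral.integral_symm (-1) 1] at hsub
  rw [bmomR, eq_comm, ← neg_inj, ← mul_neg, ← mul_neg, ← hsub, ← intervalIntegral.integral_neg]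
  simp only [Function.comp_apply, mul_neg]

lemma IsPlusFactor.integral_weightedCosPow_mul_weightedCosPow (hc : IsPlusFactor c) {b : ℝ → ℝ}
    (hb : ∀ θ, b (Real.cos θ) = ‖c (Circle.exp θ)‖ ^ 2) (l m : ℕ) :
    ∫ θ, weightedCosPow c l θ * weightedCosPow c m θ ∂halfCircle = bmomR b (l + m) := by
  have hcont : ContinuousOn b (Set.Icc (-1) 1) := by
    have harccos : Continuous fun x => ‖c (Circle.exp (Real.arccos x))‖ ^ 2 :=
      ((continuous_comp_circleExp hc.diffContOnCl).comp Real.continuous_arccos).norm.pow 2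
    exact harccos.continuousOn.congr fun x hx => by
      simp only [← hb, Real.cos_arccos hx.1 hx.2]
  have hconst : (Real.sqrt (2 * π))⁻¹ * (Real.sqrt (2 * π))⁻¹ = 1 / (2 * π) := by
    rw [← mul_inv, Real.mul_self_sqrt (by positivity), one_div]
  rw [bmomR_eq_integral_cos hcont, intervalIntegral.integral_of_le Real.pi_pos.le,
    integral_Ioc_eq_integral_Ioo, ← integral_const_mul]
  refine integral_congr_ae (ae_halfCircle_sin_pos.mono fun θ hθ => ?_)
  have hsq := sq_norm_szego_circleExp c hθ.le
  simp only [weightedCosPow]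
  rw [mul_mul_mul_comm, hconst, hb, mul_mul_mul_comm, ← sq, hsq, ← pow_add]
  field_simp

end Biorthogonality

section MomentDeterminant

variable {c : ℂ → ℂ}

lemma inner_toLp_ofReal {X : Type*} [MeasurableSpace X] {ν : Measure X} {f g : X → ℝ}
    (hf : MemLp (fun x => (f x : ℂ)) 2 ν) (hg : MemLp (fun x => (g x : ℂ)) 2 ν) :
    ⟪hf.toLp, hg.toLp⟫_ℂ = ((∫ x, f x * g x ∂ν : ℝ) : ℂ) := by
  refine (integral_congr_ae ?_).trans integral_complex_ofReal
  filter_upwards [hf.coeFn_toLp, hg.coeFn_toLp] with x hfx hgx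
  rw [hfx, hgx, RCLike.inner_apply, Complex.conj_ofReal, mul_comm]
  exact (Complex.ofReal_mul _ _).symm

lemma ofReal_phaseWave (c : ℂ → ℂ) (j : ℕ) (θ : ℝ) :
    (phaseWave c j θ : ℂ) =
      ((Real.sqrt (2 / π) / 2 : ℝ) : ℂ) * symmetrize c (fun z => z ^ j) θ := by
  rw [symmetrize_eq_ofReal c (F := fun z => z ^ j) (map_pow conj _ j).symm, phaseWave,
    ← Complex.ofReal_mul]
  congr 1
  ring

lemma IsPlusFactor.memLp_phaseWave (hc : IsPlusFactor c) (j : ℕ) :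
    MemLp (fun θ => (phaseWave c j θ : ℂ)) 2 halfCircle := by
  have hmeas : AEStronglyMeasurable (fun θ : ℝ => (Circle.exp θ : ℂ) ^ j * phase c θ)
      halfCircle :=
    (Continuous.aestronglyMeasurable (by fun_prop)).mul hc.aestronglyMeasurable_phase
  refine ((MemLp.of_bound hmeas 1 (Eventually.of_forall fun θ => ?_)).re.const_mul _).ofReal
  rw [norm_mul, norm_pow, Circle.norm_coe, one_pow, one_mul]
  exact norm_phase_le_one c θ

lemma IsPlusFactor.memLp_weightedCosPow (hc : IsPlusFactor c) (l : ℕ) :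
    MemLp (fun θ => (weightedCosPow c l θ : ℂ)) 2 halfCircle := by
  have hszego := continuous_comp_circleExp hc.diffContOnCl_szego
  have hcont : Continuous fun θ => (weightedCosPow c l θ : ℂ) := by
    unfold weightedCosPow
    fun_prop
  obtain ⟨C, hC⟩ :=
    (isCompact_Icc (a := 0) (b := π)).exists_bound_of_continuousOn hcont.continuousOn
  exact MemLp.of_bound hcont.aestronglyMeasurable C <|
    (ae_restrict_mem measurableSet_Ioo).mono fun θ hθ => hC θ (Set.Ioo_subset_Icc_self hθ)

lemma IsPlusFactor.dense_span_phaseWave (hc : IsPlusFactor c) :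
    Dense (Submodule.span ℂ (Set.range fun j => (hc.memLp_phaseWave j).toLp) :
      Set (Lp ℂ 2 halfCircle)) := by
  rw [Submodule.dense_iff_topologicalClosure_eq_top, Submodule.topologicalClosure_eq_top_iff,
    Submodule.eq_bot_iff]
  intro h hh
  refine Lp.eq_zero_iff_ae_eq_zero.2 (hc.ae_eq_zero_of_integral_symmetrize_mul
    ((Lp.memLp h).integrable one_le_two) fun j => ?_)
  have hconst : ((Real.sqrt (2 / π) / 2 : ℝ) : ℂ) ≠ 0 :=
    Complex.ofReal_ne_zero.2 (by positivity)
  have hinner := (Submodule.mem_orthogonal _ _).1 hh _ (Submodule.subset_span ⟨j, rfl⟩)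
  refine (mul_eq_zero.1 ?_).resolve_left hconst
  rw [← integral_const_mul, ← hinner, L2.inner_def]
  refine integral_congr_ae ((hc.memLp_phaseWave j).coeFn_toLp.mono fun θ hθ => ?_)
  beta_reduce
  rw [hθ, RCLike.inner_apply, Complex.conj_ofReal, ← mul_assoc, ← ofReal_phaseWave, mul_comm]

theorem IsPlusFactor.det_bmomR_eq_det_ent (hc : IsPlusFactor c) {A A' : l2 →L[ℂ] l2}
    (hA : ∀ j k, ent A j k = (if j = k then 1 else 0) + fc (symbol c) ((j : ℤ) + k + 1))
    (hA' : A' ∘L A = 1) {b : ℝ → ℝ} (hb : ∀ θ, b (Real.cos θ) = ‖c (Circle.exp θ)‖ ^ 2) (N : ℕ) :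
    ((Matrix.of fun j k : Fin N => bmomR b (j + k)).det : ℂ) =
      (Matrix.of fun j k : Fin N => ent A' j k).det := by
  have hinner : ∀ j l, l ≤ j → ⟪(hc.memLp_phaseWave j).toLp, (hc.memLp_weightedCosPow l).toLp⟫_ℂ =
      if l = j then 1 else 0 := fun j l hlj => by
    rw [inner_toLp_ofReal, hc.integral_phaseWave_mul_weightedCosPow hlj]
    exact apply_ite _ _ _ _ |>.trans (by rw [Complex.ofReal_one, Complex.ofReal_zero])
  rw [← det_gram_eq_det_ent hA' (r := fun j => (hc.memLp_phaseWave j).toLp)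
    (p := fun l => (hc.memLp_weightedCosPow l).toLp)
    (by ext j k; rw [Matrix.gram_apply, inner_toLp_ofReal, hc.integral_phaseWave_mul_phaseWave,
          Matrix.of_apply, hA])
    hc.dense_span_phaseWave (fun j l hlj => by rw [hinner j l hlj.le, if_neg hlj.ne])
    (fun j => by rw [hinner j j le_rfl, if_pos rfl]) N, ← Complex.ofRealHom_eq_coe,
    RingHom.map_det]
  congr 1
  ext j k
  rw [Matrix.gram_apply, inner_toLp_ofReal, hc.integral_weightedCosPow_mul_weightedCosPow hb]
  rfl

end MomentDeterminant

section SqrtCayley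

/-- The principal square root of the Cayley transform `(1 + w) / (1 - w)`. -/
def sqrtCayley (w : ℂ) : ℂ := Complex.exp ((1 / 2 : ℂ) * Complex.log ((1 + w) / (1 - w)))

lemma cayley_re_pos {w : ℂ} (hw : ‖w‖ < 1) : 0 < ((1 + w) / (1 - w)).re := by
  have hne : 1 - w ≠ 0 := sub_ne_zero.2 fun h => by simp [← h] at hw
  have hre : ((1 + w) / (1 - w)).re = (1 - ‖w‖ ^ 2) / Complex.normSq (1 - w) := by
    rw [Complex.div_re, ← add_div, Complex.sq_norm, Complex.normSq_apply w]
    simp only [Complex.add_re, Complex.sub_re, Complex.add_im, Complex.sub_im, Complex.one_re,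
      Complex.one_im]
    ring
  rw [hre]
  exact div_pos (sub_pos.2 (pow_lt_one₀ (norm_nonneg w) hw two_ne_zero)) (Complex.normSq_pos.2 hne)

lemma cayley_im_ne_zero {w : ℂ} (hw : w.im ≠ 0) : ((1 + w) / (1 - w)).im ≠ 0 := by
  have hne : 1 - w ≠ 0 := sub_ne_zero.2 fun h => by simp [← h] at hw
  have him : ((1 + w) / (1 - w)).im = 2 * w.im / Complex.normSq (1 - w) := by
    rw [Complex.div_im, ← sub_div]
    simp only [Complex.add_re, Complex.sub_re, Complex.add_im, Complex.sub_im, Complex.one_re,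
      Complex.one_im]
    ring
  rw [him]
  exact div_ne_zero (mul_ne_zero two_ne_zero hw) (Complex.normSq_pos.2 hne).ne'

lemma cayley_mem_slitPlane {w : ℂ} (hw : ‖w‖ < 1 ∨ w.im ≠ 0) :
    (1 + w) / (1 - w) ∈ Complex.slitPlane :=
  Complex.mem_slitPlane_iff.2 (hw.imp cayley_re_pos cayley_im_ne_zero)

lemma sqrtCayley_sq {w : ℂ} (hw : ‖w‖ < 1 ∨ w.im ≠ 0) :
    sqrtCayley w ^ 2 = (1 + w) / (1 - w) := by
  rw [sqrtCayley, ← Complex.exp_nat_mul, Nat.cast_ofNat, ← mul_assoc,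
    mul_one_div_cancel two_ne_zero, one_mul,
    Complex.exp_log (Complex.slitPlane_ne_zero (cayley_mem_slitPlane hw))]

lemma sqrtCayley_re_pos {w : ℂ} (hw : ‖w‖ < 1 ∨ w.im ≠ 0) : 0 < (sqrtCayley w).re := by
  have harg := Complex.mem_slitPlane_iff_arg.1 (cayley_mem_slitPlane hw)
  have hle := Complex.arg_le_pi ((1 + w) / (1 - w))
  have hgt := Complex.neg_pi_lt_arg ((1 + w) / (1 - w))
  have him : ((1 / 2 : ℂ) * Complex.log ((1 + w) / (1 - w))).im =
      Complex.arg ((1 + w) / (1 - w)) / 2 := by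
    rw [one_div_mul_eq_div, Complex.div_ofNat_im, Complex.log_im]
  rw [sqrtCayley, Complex.exp_re, him]
  exact mul_pos (Real.exp_pos _) (Real.cos_pos_of_mem_Ioo
    ⟨by linarith, by linarith [lt_of_le_of_ne hle harg.1]⟩)

lemma sqrtCayley_eq_of_sq_eq {v w : ℂ} (hv : 0 < v.re) (hvw : v ^ 2 = (1 + w) / (1 - w)) :
    sqrtCayley w = v := by
  have hv0 : v ^ 2 ≠ 0 := pow_ne_zero 2 fun h => by simp [h] at hv
  rw [sqrtCayley, ← hvw, mul_comm, ← Complex.cpow_def_of_ne_zero hv0, one_div,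
    Complex.sq_cpow_two_inv hv]

lemma differentiableAt_sqrtCayley {w : ℂ} (hw : ‖w‖ < 1 ∨ w.im ≠ 0) :
    DifferentiableAt ℂ sqrtCayley w := by
  have hslit := cayley_mem_slitPlane hw
  have hne : 1 - w ≠ 0 := fun h => by simp [h] at hslit
  exact (((by fun_prop : DifferentiableAt ℂ (fun w : ℂ => 1 + w) w).div (by fun_prop) hne).clog
    hslit).const_mul _ |>.cexp

lemma sqrtCayley_conj {w : ℂ} (hw : ‖w‖ < 1 ∨ w.im ≠ 0) :
    sqrtCayley (conj w) = conj (sqrtCayley w) :=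
  sqrtCayley_eq_of_sq_eq (by simpa using sqrtCayley_re_pos hw) (by
    rw [← map_pow, sqrtCayley_sq hw]
    simp)

lemma isPlusFactor_sqrtCayley_mul {μ : ℝ} (hμ : |μ| < 1) :
    IsPlusFactor fun z => sqrtCayley (μ * z) := by
  have hnorm : ∀ {z : ℂ}, ‖z‖ ≤ 1 → ‖μ * z‖ < 1 := fun {z} hz => by
    rw [norm_mul, Complex.norm_real]
    exact (mul_le_of_le_one_right (abs_nonneg μ) hz).trans_lt hμ
  refine ⟨DifferentiableOn.diffContOnCl_ball (U := Metric.closedBall 0 1) (fun z hz => ?_)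
    subset_rfl, fun z hz h => ?_, fun z hz => ?_, by simp [sqrtCayley]⟩
  · have hz : ‖z‖ ≤ 1 := by simpa using hz
    exact ((differentiableAt_sqrtCayley (.inl (hnorm hz))).comp z
      (differentiableAt_id.const_mul _)).differentiableWithinAt
  · exact (sqrtCayley_re_pos (.inl (hnorm hz))).ne' (by simp [h])
  · rw [← sqrtCayley_conj (.inl (hnorm hz)), map_mul, Complex.conj_ofReal]

lemma sq_norm_one_add_mul_circleExp (s θ : ℝ) :
    ‖1 + (s : ℂ) * Circle.exp θ‖ ^ 2 = 1 + s ^ 2 + 2 * s * Real.cos θ := by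
  rw [Complex.sq_norm, Complex.normSq_apply]
  simp only [Complex.add_re, Complex.add_im, Complex.one_re, Complex.one_im,
    Complex.re_ofReal_mul, Complex.im_ofReal_mul, circleExp_re, circleExp_im]
  linear_combination s ^ 2 * Real.sin_sq_add_cos_sq θ

lemma sq_norm_sqrtCayley_mul_circleExp {μ ρ : ℝ} (hμ : |μ| < 1) (hρ : ρ = 2 * μ / (1 + μ ^ 2))
    (θ : ℝ) :
    ‖sqrtCayley (μ * Circle.exp θ)‖ ^ 2 =
      Real.sqrt ((1 + ρ * Real.cos θ) / (1 - ρ * Real.cos θ)) := by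
  have hpos : 0 < 1 + μ ^ 2 := by positivity
  have hadd : ‖1 + (μ : ℂ) * Circle.exp θ‖ ^ 2 = (1 + ρ * Real.cos θ) * (1 + μ ^ 2) := by
    rw [sq_norm_one_add_mul_circleExp, hρ]
    field_simp
  have hsub : ‖1 - (μ : ℂ) * Circle.exp θ‖ ^ 2 = (1 - ρ * Real.cos θ) * (1 + μ ^ 2) := by
    rw [sub_eq_add_neg, ← neg_mul, ← Complex.ofReal_neg, sq_norm_one_add_mul_circleExp, hρ]
    field_simp
    ring
  rw [← norm_pow, sqrtCayley_sq (.inl (by simpa using hμ)), ← Real.sqrt_sq (norm_nonneg _),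
    norm_div, div_pow, hadd, hsub, mul_div_mul_right _ _ hpos.ne']

end SqrtCayley

section PosSemidefLimits

variable {ι : Type*}

lemma posSemidef_of_tendsto {κ : Type*} {F : Filter κ} [F.NeBot] {M : κ → Matrix ι ι ℂ}
    {L : Matrix ι ι ℂ} (hM : ∀ᶠ t in F, (M t).PosSemidef)
    (hlim : ∀ j k, Tendsto (fun t => M t j k) F (𝓝 (L j k))) : L.PosSemidef := by
  refine ⟨Matrix.ext fun j k => ?_, fun x => ?_⟩
  · refine tendsto_nhds_unique ((hlim k j).star.congr' ?_) (hlim j k)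
    exact hM.mono fun t ht => ht.1.apply j k
  · refine ge_of_tendsto (b := 0) (tendsto_finsetSum _ fun j _ => tendsto_finsetSum _ fun k _ =>
      ((hlim j k).const_mul _).mul_const _) ?_
    exact hM.mono fun t ht => ht.2 x

lemma posSemidef_integral {X : Type*} [MeasurableSpace X] {ν : Measure X} {M : X → Matrix ι ι ℂ}
    (hM : ∀ᵐ t ∂ν, (M t).PosSemidef) (hint : ∀ j k, Integrable (fun t => M t j k) ν) :
    (Matrix.of fun j k => ∫ t, M t j k ∂ν).PosSemidef := by
  refine ⟨Matrix.ext fun j k => ?_, fun x => ?_⟩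
  · rw [Matrix.conjTranspose_apply, Matrix.of_apply, Matrix.of_apply, ← starRingEnd_apply,
      ← integral_conj]
    exact integral_congr_ae (hM.mono fun t ht => ht.1.apply j k)
  · have hsum : (x.sum fun j xj => x.sum fun k xk =>
        star xj * (Matrix.of fun j k => ∫ t, M t j k ∂ν) j k * xk) =
        ∫ t, x.sum fun j xj => x.sum fun k xk => star xj * M t j k * xk ∂ν := by
      have hterm : ∀ j k, Integrable (fun t => star (x j) * M t j k * x k) ν := fun j k =>
        ((hint j k).const_mul _).mul_const _
      simp only [Finsupp.sum, Matrix.of_apply]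
      rw [integral_finsetSum _ fun j _ => integrable_finsetSum _ fun k _ => hterm j k]
      refine Finset.sum_congr rfl fun j _ => ?_
      rw [integral_finsetSum _ fun k _ => hterm j k]
      refine Finset.sum_congr rfl fun k _ => ?_
      rw [integral_mul_const, integral_const_mul]
    rw [hsum]
    exact integral_nonneg_of_ae (hM.mono fun t ht => ht.2 x)

lemma posSemidef_vecMulVec_self_star (a : ι → ℂ) :
    (Matrix.vecMulVec a (star a)).PosSemidef := by
  refine ⟨Matrix.ext fun j k => by simp [Matrix.vecMulVec_apply, mul_comm], fun x => ?_⟩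
  have hsum : (x.sum fun j xj => x.sum fun k xk =>
      star xj * Matrix.vecMulVec a (star a) j k * xk) =
      (x.sum fun j xj => star xj * a j) * star (x.sum fun j xj => star xj * a j) := by
    simp only [Finsupp.sum, star_sum, Finset.sum_mul_sum, Matrix.vecMulVec_apply, star_mul',
      star_star, Pi.star_apply]
    exact Finset.sum_congr rfl fun j _ => Finset.sum_congr rfl fun k _ => by ring
  rw [hsum]
  exact mul_star_self_nonneg _

lemma posSemidef_integral_mul_pow {a b : ℝ} (hab : a ≤ b) {g : ℝ → ℝ}
    (hg : ContinuousOn g (Set.Icc a b)) (hnonneg : ∀ x ∈ Set.Icc a b, 0 ≤ g x) :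
    (Matrix.of fun j k : ℕ =>
      ((∫ x in a..b, g x * x ^ (j + k) : ℝ) : ℂ)).PosSemidef := by
  have hcont : ∀ j k : ℕ, IntegrableOn (fun x => g x * x ^ (j + k)) (Set.Ioc a b) := fun j k =>
    ((hg.mul (by fun_prop)).integrableOn_Icc).mono_set Set.Ioc_subset_Icc_self
  have hrank : ∀ᵐ x : ℝ ∂volume.restrict (Set.Ioc a b),
      (Matrix.of fun j k : ℕ => ((g x * x ^ (j + k) : ℝ) : ℂ)).PosSemidef := by
    refine (ae_restrict_mem measurableSet_Ioc).mono fun x hx => ?_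
    convert (posSemidef_vecMulVec_self_star fun j : ℕ => (x : ℂ) ^ j).smul
      (hnonneg x (Set.Ioc_subset_Icc_self hx)) using 1
    ext j k
    simp [Matrix.vecMulVec_apply, pow_add]
  convert posSemidef_integral hrank fun j k => (hcont j k).ofReal using 1
  ext j k
  rw [Matrix.of_apply, Matrix.of_apply, intervalIntegral.integral_of_le hab]
  exact integral_complex_ofReal.symm

end PosSemidefLimits

section HankelPositivity

lemma exists_hasDerivAt_upperHalfDisc {g : ℂ → ℂ} {δ : ℝ} (hδ : 0 < δ)
    (hg : DifferentiableOn ℂ g {w | -δ < w.im}) :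
    ∃ G : ℂ → ℂ, ∀ w : ℂ, ‖w‖ ≤ 1 → 0 ≤ w.im → HasDerivAt G (g w) w := by
  -- A disc centred far up the imaginary axis contains the closed half-disc and stays above `-iδ`.
  set T : ℝ := (2 * δ)⁻¹
  have hT : 0 < T := by positivity
  have hTδ : 2 * T * δ = 1 := by
    rw [mul_right_comm]
    exact mul_inv_cancel₀ (by positivity)
  have hball : ∀ w : ℂ, w ∈ Metric.ball ((T : ℂ) * Complex.I) (T + δ) ↔
      w.re ^ 2 + (w.im - T) ^ 2 < (T + δ) ^ 2 := fun w => by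
    rw [mem_ball_iff_norm, ← sq_lt_sq₀ (norm_nonneg _) (by positivity), Complex.sq_norm,
      Complex.normSq_apply]
    simp [sq]
  have hsubset : Metric.ball ((T : ℂ) * Complex.I) (T + δ) ⊆ {w | -δ < w.im} := fun w hw => by
    rw [hball] at hw
    have habs := abs_lt_of_sq_lt_sq' ((le_add_of_nonneg_left (sq_nonneg w.re)).trans_lt hw)
      (by positivity)
    rw [Set.mem_ofPred_eq]
    linarith [habs.1]
  obtain ⟨G, hG⟩ := (hg.mono hsubset).isExactOn_ball
  refine ⟨G, fun w hw him => hG w ((hball w).2 ?_)⟩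
  have hsq : w.re ^ 2 + w.im ^ 2 ≤ 1 := by
    rw [sq, sq, ← Complex.normSq_apply, ← Complex.sq_norm]
    exact pow_le_one₀ (norm_nonneg w) hw
  nlinarith [mul_nonneg hT.le him, sq_pos_of_pos hδ]

lemma integral_upper_halfCircle_eq_integral {g : ℂ → ℂ} {δ : ℝ} (hδ : 0 < δ)
    (hg : DifferentiableOn ℂ g {w | -δ < w.im}) :
    ∫ θ in (0 : ℝ)..π, -Complex.I * Circle.exp θ * g (Circle.exp θ) =
      ∫ x in (-1 : ℝ)..1, g x := by
  obtain ⟨G, hG⟩ := exists_hasDerivAt_upperHalfDisc hδ hg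
  have harc_im : ∀ θ ∈ Set.uIcc 0 π, 0 ≤ (Circle.exp θ : ℂ).im := fun θ hθ => by
    rw [Set.uIcc_of_le Real.pi_pos.le] at hθ
    rw [circleExp_im]
    exact Real.sin_nonneg_of_mem_Icc hθ
  have harc : ∀ θ ∈ Set.uIcc 0 π, HasDerivAt (fun θ : ℝ => -G (Circle.exp θ))
      (-Complex.I * Circle.exp θ * g (Circle.exp θ)) θ := fun θ hθ => by
    have hexp : HasDerivAt (fun θ : ℝ => (Circle.exp θ : ℂ)) (Circle.exp θ * Complex.I) θ := by
      simpa using (Complex.ofRealCLM.hasDerivAt (x := θ)).mul_const Complex.I |>.cexp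
    refine ((hG _ (by simp) (harc_im θ hθ)).comp θ hexp).neg.congr_deriv ?_
    ring
  have hdiam : ∀ x ∈ Set.uIcc (-1 : ℝ) 1, HasDerivAt (fun x : ℝ => G x) (g x) x := fun x hx => by
    rw [Set.uIcc_of_le (by norm_num)] at hx
    exact (hG x (by simpa using abs_le.2 hx) (by simp)).comp_ofReal
  have harc_int : IntervalIntegrable
      (fun θ : ℝ => -Complex.I * Circle.exp θ * g (Circle.exp θ)) volume 0 π :=
    ContinuousOn.intervalIntegrable <| ContinuousOn.mul (by fun_prop) <|
      hg.continuousOn.comp (f := fun θ : ℝ => (Circle.exp θ : ℂ)) (by fun_prop)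
        fun θ hθ => (neg_lt_zero.2 hδ).trans_le (harc_im θ hθ)
  have hdiam_int : IntervalIntegrable (fun x : ℝ => g x) volume (-1) 1 :=
    ContinuousOn.intervalIntegrable <|
      hg.continuousOn.comp (f := fun x : ℝ => (x : ℂ)) (by fun_prop) fun x _ => by simpa using hδ
  rw [intervalIntegral.integral_eq_sub_of_hasDerivAt harc harc_int,
    intervalIntegral.integral_eq_sub_of_hasDerivAt hdiam hdiam_int]
  simp [neg_add_eq_sub]

/-- The holomorphic continuation of `c(z) / c(z̄)`, `c(z) = sqrtCayley (μ z)`, from the upper unit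
half-circle, where `z̄ = z⁻¹`, to the upper half-plane. -/
def ratioContinuation (μ : ℝ) (w : ℂ) : ℂ :=
  sqrtCayley ((μ / (1 - μ ^ 2) : ℝ) * (w - w⁻¹))

variable {μ : ℝ}

lemma norm_lt_one_or_im_ne_zero_of_im_pos_or_sq_eq_one (hμ : |μ| < 1) {w : ℂ}
    (hw : 0 < w.im ∨ w ^ 2 = 1) :
    ‖((μ / (1 - μ ^ 2) : ℝ) : ℂ) * (w - w⁻¹)‖ < 1 ∨
      (((μ / (1 - μ ^ 2) : ℝ) : ℂ) * (w - w⁻¹)).im ≠ 0 := by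
  have hne : 1 - μ ^ 2 ≠ 0 := (sub_pos.2 ((sq_lt_one_iff_abs_lt_one μ).2 hμ)).ne'
  rcases hw with him | hsq
  · have hpos : 0 < (w - w⁻¹).im := by
      rw [Complex.sub_im, Complex.inv_im, neg_div, sub_neg_eq_add]
      exact add_pos_of_pos_of_nonneg him (div_nonneg him.le (Complex.normSq_nonneg w))
    rcases eq_or_ne μ 0 with rfl | hμ0
    · simp
    · rw [Complex.im_ofReal_mul]
      exact .inr (mul_ne_zero (div_ne_zero hμ0 hne) hpos.ne')
  · simp [inv_eq_of_mul_eq_one_left ((sq w).symm.trans hsq)]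

lemma differentiableAt_ratioContinuation (hμ : |μ| < 1) {w : ℂ} (hw : 0 < w.im ∨ w ^ 2 = 1) :
    DifferentiableAt ℂ (ratioContinuation μ) w := by
  have hw0 : w ≠ 0 := by
    rintro rfl
    simp at hw
  exact (differentiableAt_sqrtCayley
    (norm_lt_one_or_im_ne_zero_of_im_pos_or_sq_eq_one hμ hw)).comp w
    ((differentiableAt_id.sub (differentiableAt_inv hw0)).const_mul _)

lemma ratioContinuation_re_pos (hμ : |μ| < 1) {w : ℂ} (hw : 0 < w.im ∨ w ^ 2 = 1) :
    0 < (ratioContinuation μ w).re :=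
  sqrtCayley_re_pos (norm_lt_one_or_im_ne_zero_of_im_pos_or_sq_eq_one hμ hw)

lemma div_conj_re_pos {v : ℂ} (hv : 0 < (v ^ 2).re) : 0 < (v / conj v).re := by
  have hv0 : v ≠ 0 := by
    rintro rfl
    simp at hv
  have hdiv : v / conj v = v ^ 2 / (Complex.normSq v : ℂ) := by
    rw [Complex.normSq_eq_conj_mul_self, sq, mul_div_mul_right _ _ hv0]
  rw [hdiv, Complex.div_ofReal_re]
  exact div_pos hv (Complex.normSq_pos.2 hv0)

lemma cayley_div_conj_cayley (hμ : |μ| < 1) {z : ℂ} (hz : ‖z‖ = 1) :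
    (1 + μ * z) / (1 - μ * z) / conj ((1 + μ * z) / (1 - μ * z)) =
      (1 + (μ / (1 - μ ^ 2) : ℝ) * (z - z⁻¹)) / (1 - (μ / (1 - μ ^ 2) : ℝ) * (z - z⁻¹)) := by
  have hμ2 : (1 - μ ^ 2 : ℂ) ≠ 0 := by
    exact_mod_cast (sub_pos.2 ((sq_lt_one_iff_abs_lt_one μ).2 hμ)).ne'
  have hz0 : z ≠ 0 := norm_ne_zero_iff.1 (hz ▸ one_ne_zero)
  have hnum : 1 + (μ / (1 - μ ^ 2) : ℝ) * (z - z⁻¹) =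
      (1 + μ * z) * (1 - μ * z⁻¹) / (1 - μ ^ 2) := by
    push_cast
    field_simp
    ring
  have hden : 1 - (μ / (1 - μ ^ 2) : ℝ) * (z - z⁻¹) =
      (1 - μ * z) * (1 + μ * z⁻¹) / (1 - μ ^ 2) := by
    push_cast
    field_simp
    ring
  rw [hnum, hden, div_div_div_cancel_right₀ hμ2]
  simp only [map_div₀, map_add, map_sub, map_mul, map_one, Complex.conj_ofReal,
    ← Complex.inv_eq_conj hz, div_div_div_eq]

lemma ratioContinuation_circleExp (hμ : |μ| < 1) (θ : ℝ) :
    ratioContinuation μ (Circle.exp θ) =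
      sqrtCayley (μ * Circle.exp θ) / conj (sqrtCayley (μ * Circle.exp θ)) := by
  have hnorm : ‖(μ : ℂ) * Circle.exp θ‖ < 1 := by simpa using hμ
  have hsq := sqrtCayley_sq (.inl hnorm)
  refine sqrtCayley_eq_of_sq_eq (div_conj_re_pos (hsq ▸ cayley_re_pos hnorm)) ?_
  rw [div_pow, ← map_pow, hsq]
  exact cayley_div_conj_cayley hμ (Circle.norm_coe _)

lemma tendsto_integral_ratioContinuation (hμ : |μ| < 1) (m : ℕ) :
    Tendsto (fun δ : ℝ => ∫ θ in (0 : ℝ)..π, -Complex.I * Circle.exp θ *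
        (ratioContinuation μ (Circle.exp θ + δ * Complex.I) * (Circle.exp θ : ℂ) ^ m))
      (𝓝[>] 0) (𝓝 (∫ θ in (0 : ℝ)..π, -Complex.I * Circle.exp θ *
        (ratioContinuation μ (Circle.exp θ) * (Circle.exp θ : ℂ) ^ m))) := by
  -- The absolute values make the integrand continuous on the whole plane.
  set F : ℝ → ℝ → ℂ := fun δ θ => -Complex.I * Circle.exp θ *
    (ratioContinuation μ (Real.cos θ + (|Real.sin θ| + |δ| : ℝ) * Complex.I) *
      (Circle.exp θ : ℂ) ^ m)
  have hcont : Continuous fun p : ℝ × ℝ =>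
      ratioContinuation μ (Real.cos p.2 + (|Real.sin p.2| + |p.1| : ℝ) * Complex.I) := by
    refine continuous_iff_continuousAt.2 fun p => ContinuousAt.comp (g := ratioContinuation μ)
      (differentiableAt_ratioContinuation hμ ?_).continuousAt (by fun_prop)
    by_cases hsin : Real.sin p.2 = 0
    · by_cases hδ : p.1 = 0
      · right
        rw [hsin, hδ, abs_zero, add_zero, Complex.ofReal_zero, zero_mul, add_zero]
        exact_mod_cast (by simpa [hsin] using Real.sin_sq_add_cos_sq p.2 : Real.cos p.2 ^ 2 = 1)
      · left
        simpa using add_pos_of_nonneg_of_pos (abs_nonneg (Real.sin p.2)) (abs_pos.2 hδ)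
    · left
      simpa using add_pos_of_pos_of_nonneg (abs_pos.2 hsin) (abs_nonneg p.1)
  have hF : Continuous F.uncurry := by
    simp only [F, Function.uncurry_def]
    fun_prop
  have hFint : ∀ δ : ℝ, 0 ≤ δ → ∫ θ in (0 : ℝ)..π, F δ θ =
      ∫ θ in (0 : ℝ)..π, -Complex.I * Circle.exp θ *
        (ratioContinuation μ (Circle.exp θ + δ * Complex.I) * (Circle.exp θ : ℂ) ^ m) :=
    fun δ hδ => intervalIntegral.integral_congr fun θ hθ => by
      rw [Set.uIcc_of_le Real.pi_pos.le] at hθ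
      have hpoint : (Real.cos θ + (|Real.sin θ| + |δ| : ℝ) * Complex.I : ℂ) =
          Circle.exp θ + δ * Complex.I := by
        rw [abs_of_nonneg (Real.sin_nonneg_of_mem_Icc hθ), abs_of_nonneg hδ]
        rw [Circle.coe_exp, Complex.exp_mul_I]
        push_cast
        ring
      simp only [F, hpoint]
  have hlim := (intervalIntegral.continuous_parametric_intervalIntegral_of_continuous'
    (μ := volume) hF 0 π).tendsto 0
  rw [hFint 0 le_rfl] at hlim
  simp only [Complex.ofReal_zero, zero_mul, add_zero] at hlim
  exact (hlim.mono_left nhdsWithin_le_nhds).congr'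
    (eventually_mem_nhdsWithin.mono fun δ hδ => hFint δ (le_of_lt hδ))

lemma fc_symbol_sqrtCayley (hμ : |μ| < 1) (m : ℕ) :
    fc (symbol fun z => sqrtCayley (μ * z)) (m + 1) =
      ((1 / π * (∫ θ in (0 : ℝ)..π, -Complex.I * Circle.exp θ *
        (ratioContinuation μ (Circle.exp θ) * (Circle.exp θ : ℂ) ^ m)).re : ℝ) : ℂ) := by
  have hplus := isPlusFactor_sqrtCayley_mul hμ
  have hratio := hplus.continuous_div_conj_circleExp
  have hint : IntervalIntegrable (fun θ => -Complex.I * Circle.exp θ *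
      (ratioContinuation μ (Circle.exp θ) * (Circle.exp θ : ℂ) ^ m)) volume 0 π := by
    simp only [ratioContinuation_circleExp hμ]
    exact Continuous.intervalIntegrable (by fun_prop) _ _
  rw [← Nat.cast_succ, hplus.fc_symbol, ← RCLike.re_eq_complex_re,
    ← intervalIntegral.intervalIntegral_re hint]
  congr 3 with θ
  rw [ratioContinuation_circleExp hμ, pow_succ', RCLike.re_eq_complex_re]
  congr 1
  ring

lemma re_integral_upper_halfCircle_ratioContinuation (hμ : |μ| < 1) (m : ℕ) {δ : ℝ} (hδ : 0 < δ) :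
    (∫ θ in (0 : ℝ)..π, -Complex.I * Circle.exp θ *
        (ratioContinuation μ (Circle.exp θ + δ * Complex.I) * (Circle.exp θ : ℂ) ^ m)).re =
      ∫ x in (-1 : ℝ)..1, (ratioContinuation μ (x + δ * Complex.I)).re * x ^ m := by
  have hdiff : DifferentiableOn ℂ
      (fun w => ratioContinuation μ (w + δ * Complex.I) * w ^ m) {w | -δ < w.im} := fun w hw => by
    have him : 0 < (w + δ * Complex.I).im := by simpa [neg_lt_iff_pos_add] using hw
    exact (((differentiableAt_ratioContinuation hμ (.inl him)).comp w
      (differentiableAt_id.add_const _)).mul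
      (differentiableAt_id.pow m)).differentiableWithinAt
  have hint : IntervalIntegrable (fun x : ℝ =>
      ratioContinuation μ (x + δ * Complex.I) * (x : ℂ) ^ m) volume (-1) 1 :=
    ContinuousOn.intervalIntegrable <| hdiff.continuousOn.comp
      (f := fun x : ℝ => (x : ℂ)) (by fun_prop) fun x _ => by simpa using hδ
  rw [integral_upper_halfCircle_eq_integral hδ hdiff, ← RCLike.re_eq_complex_re,
    ← intervalIntegral.intervalIntegral_re hint]
  simp only [RCLike.re_eq_complex_re, ← Complex.ofReal_pow, Complex.re_mul_ofReal]

lemma posSemidef_re_ratioContinuation_moments (hμ : |μ| < 1) {δ : ℝ} (hδ : 0 < δ) :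
    (Matrix.of fun j k : ℕ => ((∫ x in (-1 : ℝ)..1,
      (ratioContinuation μ (x + δ * Complex.I)).re * x ^ (j + k) : ℝ) : ℂ)).PosSemidef := by
  have hpos : ∀ x : ℝ, 0 < (x + δ * Complex.I : ℂ).im := fun x => by simpa using hδ
  have hcont : Continuous fun x : ℝ => ratioContinuation μ (x + δ * Complex.I) :=
    continuous_iff_continuousAt.2 fun x => ContinuousAt.comp (g := ratioContinuation μ)
      (differentiableAt_ratioContinuation hμ (.inl (hpos x))).continuousAt (by fun_prop)
  exact posSemidef_integral_mul_pow (by norm_num)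
    (Complex.continuous_re.comp hcont).continuousOn fun x _ =>
      (ratioContinuation_re_pos hμ (.inl (hpos x))).le

lemma posSemidef_fc_symbol_sqrtCayley (hμ : |μ| < 1) :
    (Matrix.of fun j k : ℕ =>
      fc (symbol fun z => sqrtCayley (μ * z)) ((j : ℤ) + k + 1)).PosSemidef := by
  refine posSemidef_of_tendsto (F := 𝓝[>] (0 : ℝ)) (eventually_mem_nhdsWithin.mono fun δ hδ =>
    (posSemidef_re_ratioContinuation_moments hμ hδ).smul (a := 1 / π) (by positivity))
    fun j k => ?_
  have hlim := ((Complex.continuous_re.tendsto _).comp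
    (tendsto_integral_ratioContinuation hμ (j + k))).const_mul (1 / π)
  rw [Matrix.of_apply, ← Nat.cast_add, fc_symbol_sqrtCayley hμ]
  refine ((Complex.continuous_ofReal.tendsto _).comp hlim).congr' ?_
  filter_upwards [self_mem_nhdsWithin] with δ hδ
  simp only [Function.comp_apply, re_integral_upper_halfCircle_ratioContinuation hμ (j + k) hδ,
    Matrix.smul_apply, Matrix.of_apply, Complex.real_smul, Complex.ofReal_mul]

end HankelPositivity

lemma isUnit_of_ent_eq_one_add_fc_symbol_sqrtCayley {μ : ℝ} (hμ : |μ| < 1) {A : l2 →L[ℂ] l2}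
    (hA : ∀ j k : ℕ, ent A j k = (if j = k then 1 else 0) +
      fc (symbol fun z => sqrtCayley (μ * z)) ((j : ℤ) + k + 1)) : IsUnit A := by
  refine isUnit_of_posSemidef_ent_sub_one ?_
  convert posSemidef_fc_symbol_sqrtCayley hμ using 1
  ext j k
  have hent : ent (A - 1) j k = ent A j k - ⟪ee j, ee k⟫_ℂ := inner_sub_right _ _ _
  rw [Matrix.of_apply, Matrix.of_apply, hent, hA, inner_ee_ee, add_sub_cancel_left]

theorem stmt13_general (μ : ℝ) (hμ : |μ| < 1) (ρ : ℝ) (hρ : ρ = 2 * μ / (1 + μ ^ 2))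
    (cplus : ℂ → ℂ)
    (hcplus : ∀ z : ℂ, cplus z =
      Complex.exp ((1 / 2 : ℂ) * Complex.log ((1 + μ * z) / (1 - μ * z))))
    (ψ : ℝ → ℂ)
    (hψ : ∀ θ : ℝ, ψ θ =
      cplus (Complex.exp (-(Complex.I * θ))) *
        (cplus (Complex.exp (Complex.I * θ)))⁻¹ * chi θ)
    (A : l2 →L[ℂ] l2)
    (hA : ∀ j k : ℕ, ent A j k =
      (if j = k then 1 else 0) + fc ψ ((j : ℤ) + k + 1)) :
    ∃ A' : l2 →L[ℂ] l2, A ∘L A' = 1 ∧ A' ∘L A = 1 ∧ ∀ N : ℕ,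
      ((Matrix.of fun j k : Fin N =>
          bmomR (fun x => Real.sqrt ((1 + ρ * x) / (1 - ρ * x))) ((j : ℕ) + k)).det : ℂ)
        = (Matrix.of fun j k : Fin N => ent A' j k).det := by
  obtain rfl : cplus = fun z => sqrtCayley (μ * z) := funext hcplus
  obtain rfl : ψ = symbol fun z => sqrtCayley (μ * z) := funext hψ
  obtain ⟨⟨_, A', hAA', hA'A⟩, rfl⟩ := isUnit_of_ent_eq_one_add_fc_symbol_sqrtCayley hμ hA
  exact ⟨A', hAA', hA'A, (isPlusFactor_sqrtCayley_mul hμ).det_bmomR_eq_det_ent hA hA'A fun θ =>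
    (sq_norm_sqrtCayley_mul_circleExp hμ hρ θ).symm⟩

lemma div_two_mul_mem_Ioo {α x : ℝ} (hα : 0 < α) (hx : α / π < x) :
    α / (2 * x) ∈ Set.Ioo 0 (π / 2) := by
  have hx0 : 0 < x := (div_pos hα Real.pi_pos).trans hx
  rw [div_lt_iff₀ Real.pi_pos] at hx
  exact ⟨by positivity, by rw [div_lt_iff₀ (by positivity)]; linarith⟩

lemma cos_pos_of_mem_Ioo_zero {β : ℝ} (hβ : β ∈ Set.Ioo 0 (π / 2)) : 0 < Real.cos β :=
  Real.cos_pos_of_mem_Ioo ⟨by linarith [hβ.1, hβ.2], hβ.2⟩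

lemma abs_one_sub_sin_div_cos_lt_one {β : ℝ} (hβ : β ∈ Set.Ioo 0 (π / 2)) :
    |(1 - Real.sin β) / Real.cos β| < 1 := by
  have hsin : 0 < Real.sin β := Real.sin_pos_of_pos_of_lt_pi hβ.1 (by linarith [hβ.1, hβ.2])
  have hcos : 0 < Real.cos β := cos_pos_of_mem_Ioo_zero hβ
  rw [abs_div, abs_of_pos hcos, abs_of_nonneg (sub_nonneg.2 (Real.sin_le_one β)), div_lt_one hcos]
  nlinarith [Real.sin_sq_add_cos_sq β]

lemma cos_eq_two_mul_div_one_add_sq {β : ℝ} (hβ : Real.cos β ≠ 0) :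
    Real.cos β = 2 * ((1 - Real.sin β) / Real.cos β) /
      (1 + ((1 - Real.sin β) / Real.cos β) ^ 2) := by
  rw [eq_div_iff (by positivity)]
  field_simp
  linear_combination Real.sin_sq_add_cos_sq β

/-- Let `α > 0`, `n > α/π`, `μ_{α,n} = (1 − sin(α/(2n)))/cos(α/(2n))`,
`c₊(z) = exp(½ Log((1+μ_{α,n}z)/(1−μ_{α,n}z)))`,
`ψ_{α,n}(e^{iθ}) = c₊(e^{−iθ}) c₊(e^{iθ})⁻¹ χ(e^{iθ})` and
`b_{α,n}(x) = √((1+ρ_{α,n}x)/(1−ρ_{α,n}x))` with `ρ_{α,n} = cos(α/(2n))`.  Then any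
bounded operator `I + H(ψ_{α,n})` on ℓ²(ℕ) is invertible and
`det H_n[b_{α,n}] = det[Pₙ (I + H(ψ_{α,n}))⁻¹ Pₙ]`. -/
theorem stmt13 (α : ℝ) (hα : 0 < α) (n : ℕ) (hn : α / Real.pi < n)
    (μ : ℝ) (hμ : μ = (1 - Real.sin (α / (2 * n))) / Real.cos (α / (2 * n)))
    (cplus : ℂ → ℂ)
    (hcplus : ∀ z : ℂ, cplus z =
      Complex.exp ((1 / 2 : ℂ) * Complex.log ((1 + μ * z) / (1 - μ * z))))
    (ψ : ℝ → ℂ)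
    (hψ : ∀ θ : ℝ, ψ θ =
      cplus (Complex.exp (-(Complex.I * θ))) *
        (cplus (Complex.exp (Complex.I * θ)))⁻¹ * chi θ)
    (A : l2 →L[ℂ] l2)
    (hA : ∀ j k : ℕ, ent A j k =
      (if j = k then 1 else 0) + fc ψ ((j : ℤ) + k + 1)) :
    ∃ A' : l2 →L[ℂ] l2, A ∘L A' = 1 ∧ A' ∘L A = 1 ∧
      ((Matrix.of fun j k : Fin n =>
          bmomR (fun x => Real.sqrt ((1 + Real.cos (α / (2 * n)) * x) /
            (1 - Real.cos (α / (2 * n)) * x))) ((j : ℕ) + k)).det : ℂ)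
        = (Matrix.of fun j k : Fin n => ent A' j k).det := by
  have hβ := div_two_mul_mem_Ioo hα hn
  obtain ⟨A', hAA', hA'A, hdet⟩ := stmt13_general μ (hμ ▸ abs_one_sub_sin_div_cos_lt_one hβ) _
    (hμ ▸ cos_eq_two_mul_div_one_add_sq (cos_pos_of_mem_Ioo_zero hβ).ne') cplus hcplus ψ hψ A hA
  exact ⟨A', hAA', hA'A, hdet n⟩

end
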